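/- Fix a ∈ ℝ. There exist constants C₁ > 0 and C₂ > 0, depending only on a, with the following property: for every solution (Φ, W, Ψ, θ) of system (D) defined on all of ℝ with Φ(τ) > 0 for all τ, satisfying (Φ(τ), W(τ), Ψ(τ), θ(τ)) → (1, 0, 0, π/2) as τ → +∞, θ(τ) → −π/2 as τ → −∞, and liminf_{τ→−∞} Φ(τ) < ∞, one has limsup_{τ→−∞} ( Φ(τ) + |W(τ)| + |Ψ(τ)| ) ≤ C₁ and liminf_{τ→−∞} Φ(τ) ≥ C₂. -/

import Mathlib

open Filter Set

/-- The right-hand side of the `Ψ` equation in system (D). -/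
noncomputable def dPsi (a Φ W Ψ θ : ℝ) : ℝ :=
  1 / Φ ^ 3 - 1 - (a - 1) * Real.cos θ ^ 2 -
    (((16 / 3) * Real.sin θ - (224 / 27) * Real.sin θ ^ 3) * Real.cos θ ^ ((17 : ℝ) / 3) * Φ
      + ((208 / 81) * Real.sin θ ^ 2 - 10 / 9) * Real.cos θ ^ ((34 : ℝ) / 9) * W
      + (2 / 3) * Real.sin θ * Real.cos θ ^ ((17 : ℝ) / 9) * Ψ)

/-- `(Φ, W, Ψ, θ)` is a solution of system (D) on all of `ℝ`. -/
noncomputable def SolD (a : ℝ) (Φ W Ψ θ : ℝ → ℝ) : Prop :=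
  ∀ τ : ℝ,
    HasDerivAt Φ (W τ) τ ∧
    HasDerivAt W (Ψ τ) τ ∧
    HasDerivAt Ψ (dPsi a (Φ τ) (W τ) (Ψ τ) (θ τ)) τ ∧
    HasDerivAt θ (Real.cos (θ τ) ^ ((26 : ℝ) / 9)) τ

/-!
Off the planes `cos θ = 0` put `x = -tan θ` and `H = (cos θ) ^ (2 / 3) Φ`. System (D) becomes the
thin-film equation `H''' = x ^ 2 + a - 1 / H ^ 3`, and `τ → -∞` becomes `x → ∞`. Up to bounded
factors `Φ` is the quotient `X = H / q` by the equilibrium `q = (x ^ 2 + a) ^ (-1 / 3)`.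

If `H ≤ M q` at arbitrarily large `x`, then above the equilibrium a rising `H` is concave, since
otherwise `H''' ≥ 0` would make it rise forever; this limits the height of each rise and gives
`H = O(x ^ 2)`. Under this bound a rescaled energy is bounded above, and at a critical point of `X`
it dominates `X / 2 + 1 / (2 X ^ 2)`. The critical values of `X` therefore lie in a compact subset
of `(0, ∞)`, and so do all values of `X` near infinity. Landau's inequality now bounds `W` and `Ψ`,
and Barbalat's lemma, applied to the almost monotone energy `W Ψ + Φ + 1 / (2 Φ ^ 2)` and then to
`Ψ` and `Φ`, gives `(Φ, W, Ψ) → (1, 0, 0)`: the constants `C₁ = C₂ = 1` work.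

When `cos θ` vanishes identically, the same argument applies with constant forcing `1`.
-/

/-! ### Comparison and critical values -/

section Comparison

variable {f f' g g' : ℝ → ℝ} {a b : ℝ}

lemma le_of_hasDerivAt_nonneg (hab : a ≤ b) (hf : ∀ x ∈ Icc a b, HasDerivAt f (f' x) x)
    (hf' : ∀ x ∈ Ioo a b, 0 ≤ f' x) : f a ≤ f b := by
  refine monotoneOn_of_hasDerivWithinAt_nonneg (f' := f') (convex_Icc a b)
    (HasDerivAt.continuousOn hf) ?_ ?_ (left_mem_Icc.2 hab) (right_mem_Icc.2 hab) hab
  · exact fun x hx => (hf x (interior_subset hx)).hasDerivWithinAt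
  · exact fun x hx => hf' x (interior_Icc (a := a) (b := b) ▸ hx)

lemma sub_le_sub_of_hasDerivAt_le (hab : a ≤ b) (hf : ∀ x ∈ Icc a b, HasDerivAt f (f' x) x)
    (hg : ∀ x ∈ Icc a b, HasDerivAt g (g' x) x) (hle : ∀ x ∈ Ioo a b, f' x ≤ g' x) :
    f b - f a ≤ g b - g a := by
  have h := le_of_hasDerivAt_nonneg (f := g - f) hab (fun x hx => (hg x hx).sub (hf x hx))
    fun x hx => sub_nonneg.2 (hle x hx)
  simp only [Pi.sub_apply] at h
  linarith

lemma abs_sub_le_of_abs_hasDerivAt_le {B : ℝ} {s : Set ℝ} (hs : Convex ℝ s)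
    (hf : ∀ x ∈ s, HasDerivAt f (f' x) x) (hB : ∀ x ∈ s, |f' x| ≤ B) {x y : ℝ}
    (hx : x ∈ s) (hy : y ∈ s) : |f y - f x| ≤ B * |y - x| :=
  hs.norm_image_sub_le_of_norm_hasDerivWithin_le (fun z hz => (hf z hz).hasDerivWithinAt) hB hx hy

lemma tendsto_atBot_of_hasDerivAt_le_neg {c : ℝ} (hc : c < 0)
    (hf : ∀ x ≥ a, HasDerivAt f (f' x) x) (hle : ∀ x ≥ a, f' x ≤ c) :
    Tendsto f atTop atBot := by
  have hline : Tendsto (fun x => c * x + (f a - c * a)) atTop atBot :=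
    tendsto_atBot_add_const_right _ _ (tendsto_id.const_mul_atTop_of_neg hc)
  refine tendsto_atBot_mono' _ ?_ hline
  filter_upwards [eventually_ge_atTop a] with x hx
  have h := sub_le_sub_of_hasDerivAt_le hx (fun y hy => hf y hy.1)
    (fun y _ => (hasDerivAt_id y).const_mul c) fun y hy => by simpa using hle y hy.1.le
  simp only [id] at h
  linarith

lemma tendsto_atBot_of_third_hasDerivAt_le_neg {f₁ f₂ f₃ : ℝ → ℝ} {c : ℝ} (hc : c < 0)
    (hf : ∀ x ≥ a, HasDerivAt f (f₁ x) x) (hf₁ : ∀ x ≥ a, HasDerivAt f₁ (f₂ x) x)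
    (hf₂ : ∀ x ≥ a, HasDerivAt f₂ (f₃ x) x) (hle : ∀ x ≥ a, f₃ x ≤ c) :
    Tendsto f atTop atBot := by
  have integrate {g g' : ℝ → ℝ} (hg : ∀ x ≥ a, HasDerivAt g (g' x) x)
      (hg' : Tendsto g' atTop atBot) : Tendsto g atTop atBot := by
    obtain ⟨b, hb⟩ := eventually_atTop.1 (hg'.eventually_le_atBot (-1))
    exact tendsto_atBot_of_hasDerivAt_le_neg (a := max a b) neg_one_lt_zero
      (fun x hx => hg x (le_of_max_le_left hx)) fun x hx => hb x (le_of_max_le_right hx)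
  exact integrate hf (integrate hf₁ (tendsto_atBot_of_hasDerivAt_le_neg hc hf₂ hle))

lemma nonneg_of_isMaxOn_Icc_right {d : ℝ} (hab : a < b) (hmax : IsMaxOn f (Icc a b) b)
    (hf : HasDerivAt f d b) : 0 ≤ d := by
  have h := hmax.localize.hasFDerivWithinAt_nonpos hf.hasFDerivAt.hasFDerivWithinAt
    (sub_mem_posTangentConeAt_of_segment_subset
      ((convex_Icc a b).segment_subset (right_mem_Icc.2 hab.le) (left_mem_Icc.2 hab.le)))
  simp only [ContinuousLinearMap.toSpanSingleton_apply, smul_eq_mul] at h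
  nlinarith

end Comparison

section LastPoint

variable {φ : ℝ → ℝ} {a b : ℝ}

lemma exists_last_nonpos (hab : a ≤ b) (hφ : ContinuousOn φ (Icc a b)) (ha : φ a ≤ 0) :
    ∃ m ∈ Icc a b, φ m ≤ 0 ∧ ∀ s ∈ Ioc m b, 0 < φ s := by
  have hcompact : IsCompact (Icc a b ∩ φ ⁻¹' Iic 0) :=
    isCompact_Icc.of_isClosed_subset
      (hφ.preimage_isClosed_of_isClosed isClosed_Icc isClosed_Iic) inter_subset_left
  obtain ⟨m, ⟨hm, hφm⟩, hmax⟩ := hcompact.exists_isGreatest ⟨a, left_mem_Icc.2 hab, ha⟩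
  refine ⟨m, hm, hφm, fun s hs => ?_⟩
  by_contra! h
  exact (hmax ⟨⟨hm.1.trans hs.1.le, hs.2⟩, h⟩).not_gt hs.1

lemma pos_of_forall_Ico_pos (hφ : ContinuousOn φ (Ici a))
    (hstep : ∀ b ≥ a, (∀ s ∈ Ico a b, 0 < φ s) → 0 < φ b) : ∀ b ≥ a, 0 < φ b := by
  intro b hb
  by_contra! hφb
  have hcompact : IsCompact (Icc a b ∩ φ ⁻¹' Iic 0) :=
    isCompact_Icc.of_isClosed_subset ((hφ.mono Icc_subset_Ici_self).preimage_isClosed_of_isClosed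
      isClosed_Icc isClosed_Iic) inter_subset_left
  obtain ⟨m, ⟨hm, hφm⟩, hmin⟩ := hcompact.exists_isLeast ⟨b, right_mem_Icc.2 hb, hφb⟩
  refine (hstep m hm.1 fun s hs => ?_).not_ge hφm
  by_contra! h
  exact (hmin ⟨⟨hs.1, hs.2.le.trans hm.2⟩, h⟩).not_gt hs.2

end LastPoint

section CriticalValues

variable {X : ℝ → ℝ} {a C : ℝ}

lemma le_max_of_isLocalMax_le (hX : ContinuousOn X (Ici a))
    (hmax : ∀ x > a, IsLocalMax X x → X x ≤ C) (hfreq : ∃ᶠ x in atTop, X x ≤ C) :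
    ∀ x ≥ a, X x ≤ max (X a) C := by
  intro x hx
  obtain ⟨y, hxy, hy⟩ := frequently_atTop.1 hfreq x
  obtain ⟨z, hz, hzmax⟩ := isCompact_Icc.exists_isMaxOn (nonempty_Icc.2 (hx.trans hxy))
    (hX.mono Icc_subset_Ici_self)
  refine (hzmax ⟨hx, hxy⟩ : X x ≤ X z).trans ?_
  rcases hz.1.eq_or_lt with rfl | hza
  · exact le_max_left _ _
  rcases hz.2.eq_or_lt with rfl | hzy
  · exact le_max_of_le_right hy
  · exact le_max_of_le_right (hmax z hza (hzmax.isLocalMax (Icc_mem_nhds hza hzy)))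

lemma exists_forall_mem_Icc_of_isLocalExtr {c M d : ℝ} (hX : ContinuousOn X (Ici a))
    (hXa : 0 < X a) (hc : 0 < c) (hd : 0 < d)
    (hextr : ∀ x > a, IsLocalExtr X x → X x ∈ Icc c C)
    (hM : ∃ᶠ x in atTop, X x ≤ M) (hdX : ∃ᶠ x in atTop, d ≤ X x) :
    ∃ m > 0, ∃ m', ∀ x ≥ a, X x ∈ Icc m m' := by
  refine ⟨min (X a) (min c d), by positivity, max (X a) (max C M), fun x hx => ⟨?_, ?_⟩⟩
  · have h := le_max_of_isLocalMax_le (X := -X) (C := -min c d) hX.neg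
      (fun y hy hmax => neg_le_neg ((min_le_left c d).trans
        (hextr y hy (.inl (show IsLocalMin X y by simpa using hmax.neg))).1))
      (hdX.mono fun y hy => neg_le_neg ((min_le_right c d).trans hy)) x hx
    simp only [Pi.neg_apply, max_neg_neg] at h
    exact neg_le_neg_iff.1 h
  · exact le_max_of_isLocalMax_le hX
      (fun y hy hmax => (hextr y hy (.inr hmax)).2.trans (le_max_left _ _))
      (hM.mono fun y hy => hy.trans (le_max_right _ _)) x hx

lemma mem_Icc_of_half_add_inv_sq_le {X E : ℝ} (hX : 0 < X) (hE : X / 2 + 1 / (2 * X ^ 2) ≤ E) :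
    X ∈ Icc (1 / (1 + 2 * E)) (2 * E) := by
  have hinv : 0 < 1 / (2 * X ^ 2) := by positivity
  refine ⟨?_, by linarith⟩
  rw [div_le_iff₀ (by linarith)]
  have h : 1 / (2 * X ^ 2) ≤ E := by linarith
  rw [div_le_iff₀ (by positivity)] at h
  by_contra! hlt
  nlinarith

end CriticalValues

/-! ### Landau and Barbalat estimates -/

section InversePowers

variable {f : ℝ → ℝ} {f' x : ℝ}

lemma hasDerivAt_one_div_pow (hf : HasDerivAt f f' x) (hx : f x ≠ 0) (n : ℕ) :
    HasDerivAt (fun y => 1 / f y ^ n) (-(n * f') / f x ^ (n + 1)) x := by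
  simp only [one_div]
  refine ((hf.fun_pow n).fun_inv (pow_ne_zero n hx)).congr_deriv ?_
  rcases n with _ | n
  · simp
  · simp only [Nat.add_sub_cancel]
    field_simp
    ring

lemma hasDerivAt_one_div_two_mul_sq (hf : HasDerivAt f f' x) (hx : f x ≠ 0) :
    HasDerivAt (fun y => 1 / (2 * f y ^ 2)) (-f' / f x ^ 3) x := by
  have h := (hasDerivAt_one_div_pow hf hx 2).const_mul (1 / 2)
  refine (h.congr_deriv (by push_cast; ring)).congr_of_eventuallyEq (.of_forall fun y => ?_)
  simp only [one_div, mul_inv]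

end InversePowers

section LandauBarbalat

variable {f f₁ f₂ f₃ : ℝ → ℝ} {t M A : ℝ}

lemma exists_abs_deriv_le_of_mem_Icc {d : ℝ} (hd : 0 < d)
    (hf : ∀ x ∈ Icc t (t + d), HasDerivAt f (f₁ x) x)
    (hfM : ∀ x ∈ Icc t (t + d), f x ∈ Icc 0 M) : ∃ s ∈ Ioo t (t + d), d * |f₁ s| ≤ M := by
  obtain ⟨s, hs, hslope⟩ := exists_hasDerivAt_eq_slope f f₁ (lt_add_of_pos_right t hd)
    (HasDerivAt.continuousOn hf) fun x hx => hf x (Ioo_subset_Icc_self hx)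
  refine ⟨s, hs, ?_⟩
  have hleft := hfM t (left_mem_Icc.2 (by linarith))
  have hright := hfM (t + d) (right_mem_Icc.2 (by linarith))
  rw [hslope, add_sub_cancel_left, abs_div, abs_of_pos hd, mul_div_cancel₀ _ hd.ne', abs_le]
  constructor <;> linarith [hleft.1, hleft.2, hright.1, hright.2]

lemma exists_abs_derivs_le_of_mem_Icc (hf : ∀ x ∈ Icc t (t + 3), HasDerivAt f (f₁ x) x)
    (hf₁ : ∀ x ∈ Icc t (t + 3), HasDerivAt f₁ (f₂ x) x)
    (hfM : ∀ x ∈ Icc t (t + 3), f x ∈ Icc 0 M) :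
    (∃ s ∈ Icc t (t + 3), |f₁ s| ≤ M) ∧ ∃ s ∈ Icc t (t + 3), |f₂ s| ≤ 2 * M := by
  have hsub₁ : Icc t (t + 1) ⊆ Icc t (t + 3) := Icc_subset_Icc_right (by linarith)
  have hsub₂ : Icc (t + 2) (t + 2 + 1) ⊆ Icc t (t + 3) :=
    Icc_subset_Icc (by linarith) (by linarith)
  obtain ⟨p, hp, hfp⟩ := exists_abs_deriv_le_of_mem_Icc one_pos
    (fun x hx => hf x (hsub₁ hx)) fun x hx => hfM x (hsub₁ hx)
  obtain ⟨r, hr, hfr⟩ := exists_abs_deriv_le_of_mem_Icc one_pos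
    (fun x hx => hf x (hsub₂ hx)) fun x hx => hfM x (hsub₂ hx)
  rw [one_mul] at hfp hfr
  refine ⟨⟨p, hsub₁ (Ioo_subset_Icc_self hp), hfp⟩, ?_⟩
  have hgap : 1 ≤ r - p := by linarith [hp.2, hr.1]
  have hsub : Icc p r ⊆ Icc t (t + 3) := Icc_subset_Icc hp.1.le (by linarith [hr.2])
  obtain ⟨s, hs, hslope⟩ := exists_hasDerivAt_eq_slope f₁ f₂ (by linarith : p < r)
    (HasDerivAt.continuousOn fun x hx => hf₁ x (hsub hx))
    fun x hx => hf₁ x (hsub (Ioo_subset_Icc_self hx))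
  refine ⟨s, hsub (Ioo_subset_Icc_self hs), ?_⟩
  rw [hslope, abs_div, div_le_iff₀ (abs_pos.2 (by linarith)), abs_of_pos (by linarith : 0 < r - p)]
  have htri := abs_sub (f₁ r) (f₁ p)
  nlinarith [abs_nonneg (f₁ p)]

lemma abs_derivs_le_of_abs_third_deriv_le (hf : ∀ x ∈ Icc t (t + 3), HasDerivAt f (f₁ x) x)
    (hf₁ : ∀ x ∈ Icc t (t + 3), HasDerivAt f₁ (f₂ x) x)
    (hf₂ : ∀ x ∈ Icc t (t + 3), HasDerivAt f₂ (f₃ x) x)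
    (hfM : ∀ x ∈ Icc t (t + 3), f x ∈ Icc 0 M)
    (hf₃ : ∀ x ∈ Icc t (t + 3), |f₃ x| ≤ A + (|f₁ x| + |f₂ x|) / 100) :
    |f₁ t| ≤ 10 * M + 12 * A ∧ |f₂ t| ≤ 3 * M + 4 * A := by
  obtain ⟨⟨p, hp, hfp⟩, s, hs, hfs⟩ := exists_abs_derivs_le_of_mem_Icc hf hf₁ hfM
  have ht : t ∈ Icc t (t + 3) := left_mem_Icc.2 (by linarith)
  have hdist : ∀ x ∈ Icc t (t + 3), ∀ y ∈ Icc t (t + 3), |y - x| ≤ 3 := fun x hx y hy => by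
    rw [abs_le]; constructor <;> linarith [hx.1, hx.2, hy.1, hy.2]
  obtain ⟨σ, hσ, hmax⟩ := isCompact_Icc.exists_isMaxOn ⟨t, ht⟩
    (HasDerivAt.continuousOn hf₂).abs
  set n := |f₂ σ|
  have hn : ∀ x ∈ Icc t (t + 3), |f₂ x| ≤ n := fun x hx => hmax hx
  have hf₁n : ∀ x ∈ Icc t (t + 3), |f₁ x| ≤ M + 3 * n := fun x hx => by
    have hlip := abs_sub_le_of_abs_hasDerivAt_le (convex_Icc _ _) hf₁ hn hp hx
    have htri := abs_sub_abs_le_abs_sub (f₁ x) (f₁ p)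
    nlinarith [hdist p hp x hx, abs_nonneg (f₂ σ)]
  have hn_le : n ≤ 3 * M + 4 * A := by
    have hlip := abs_sub_le_of_abs_hasDerivAt_le (convex_Icc _ _) hf₂
      (B := A + (M + 4 * n) / 100) (fun x hx => by linarith [hf₃ x hx, hf₁n x hx, hn x hx]) hs hσ
    have htri : n - |f₂ s| ≤ |f₂ σ - f₂ s| := abs_sub_abs_le_abs_sub (f₂ σ) (f₂ s)
    have hB : 0 ≤ A + (M + 4 * n) / 100 := by
      linarith [hf₃ t ht, abs_nonneg (f₃ t), hf₁n t ht, hn t ht]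
    have hM : 0 ≤ M := (abs_nonneg _).trans hfp
    nlinarith [hdist s hs σ hσ]
  exact ⟨(hf₁n t ht).trans (by linarith), (hn t ht).trans hn_le⟩

lemma uniformContinuousOn_Iic_of_abs_hasDerivAt_le {N B : ℝ}
    (hf : ∀ x ≤ N, HasDerivAt f (f₁ x) x) (hB : ∀ x ≤ N, |f₁ x| ≤ B) :
    UniformContinuousOn f (Iic N) := by
  refine ((convex_Iic N).lipschitzOnWith_of_nnnorm_hasDerivWithin_le (C := B.toNNReal) (f' := f₁)
    (fun x hx => (hf x hx).hasDerivWithinAt) fun x hx => ?_).uniformContinuousOn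
  rw [← NNReal.coe_le_coe, coe_nnnorm, Real.norm_eq_abs]
  exact (hB x hx).trans (Real.le_coe_toNNReal B)

/-- Barbalat's lemma, for a derivative that is uniformly continuous up to a vanishing error. -/
lemma tendsto_zero_of_hasDerivAt_uniformContinuousOn_add {g r : ℝ → ℝ} {l N : ℝ}
    (hf : ∀ x ≤ N, HasDerivAt f (g x + r x) x) (hfl : Tendsto f atBot (nhds l))
    (hr : Tendsto r atBot (nhds 0)) (hg : UniformContinuousOn g (Iic N)) :
    Tendsto g atBot (nhds 0) := by
  rw [Metric.tendsto_nhds]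
  intro ε hε
  obtain ⟨δ, hδ, hgδ⟩ := Metric.uniformContinuousOn_iff.1 hg (ε / 3) (by positivity)
  have hdiff : Tendsto (fun x => (f (x + δ / 2) - f x) / (δ / 2)) atBot (nhds 0) := by
    simpa using ((hfl.comp (tendsto_atBot_add_const_right _ (δ / 2) tendsto_id)).sub hfl).div_const
      (δ / 2)
  obtain ⟨R, hR⟩ := eventually_atBot.1 (Metric.tendsto_nhds.1 hr (ε / 3) (by positivity))
  filter_upwards [Metric.tendsto_nhds.1 hdiff (ε / 3) (by positivity),
    eventually_le_atBot (min N R - δ)] with x hx hxN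
  have hIcc : ∀ y ∈ Icc x (x + δ / 2), y ≤ N ∧ y ≤ R := fun y hy =>
    le_min_iff.1 (by linarith [hy.2])
  obtain ⟨s, hs, hslope⟩ := exists_hasDerivAt_eq_slope f _ (by linarith : x < x + δ / 2)
    (HasDerivAt.continuousOn fun y hy => hf y (hIcc y hy).1)
    fun y hy => hf y (hIcc y (Ioo_subset_Icc_self hy)).1
  have hrs := hR s (hIcc s (Ioo_subset_Icc_self hs)).2
  have hgs := hgδ x (hIcc x (left_mem_Icc.2 (by linarith))).1 s
    (hIcc s (Ioo_subset_Icc_self hs)).1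
    (by rw [Real.dist_eq, abs_lt]; constructor <;> linarith [hs.1, hs.2])
  rw [add_sub_cancel_left] at hslope
  rw [← hslope] at hx
  simp only [Real.dist_eq, sub_zero, abs_lt] at hx hrs hgs ⊢
  constructor <;> linarith [hx.1, hx.2, hrs.1, hrs.2, hgs.1, hgs.2]

lemma exists_tendsto_atBot_of_hasDerivAt_nonneg {N b : ℝ}
    (hf : ∀ x ≤ N, HasDerivAt f (f₁ x) x) (hf₁ : ∀ x ≤ N, 0 ≤ f₁ x) (hb : ∀ x ≤ N, b ≤ f x) :
    ∃ l, Tendsto f atBot (nhds l) := by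
  have hmono : Monotone fun x => f (min x N) := fun x y hxy =>
    le_of_hasDerivAt_nonneg (min_le_min_right N hxy)
      (fun z hz => hf z (hz.2.trans (min_le_right _ _)))
      fun z hz => hf₁ z (hz.2.le.trans (min_le_right _ _))
  have hbdd : BddBelow (range fun x => f (min x N)) :=
    ⟨b, forall_mem_range.2 fun x => hb _ (min_le_right _ _)⟩
  refine ⟨_, (tendsto_atBot_ciInf hmono hbdd).congr' ?_⟩
  filter_upwards [eventually_le_atBot N] with x hx using by rw [min_eq_left hx]

end LandauBarbalat

/-! ### Convergence of perturbed flows -/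

/-- A perturbation, on `(-∞, N]`, of the film equation `Φ''' = 1 / Φ ^ 3 - 1` along a trajectory
with `m ≤ Φ ≤ M`. The size of the perturbation `P` is measured by a rate `ρ` with bounded
primitive `U`, and the coefficient `κ` of `Ψ = Φ''` is only required to be of order `√ρ`. -/
structure PerturbedFlow (m M N : ℝ) (Φ W Ψ P ρ κ U : ℝ → ℝ) : Prop where
  lower_pos : 0 < m
  mem_Icc : ∀ t ≤ N, Φ t ∈ Icc m M
  hasDerivAt_Φ : ∀ t ≤ N, HasDerivAt Φ (W t) t
  hasDerivAt_W : ∀ t ≤ N, HasDerivAt W (Ψ t) t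
  hasDerivAt_Ψ : ∀ t ≤ N, HasDerivAt Ψ (1 / Φ t ^ 3 - 1 - P t) t
  abs_le : ∀ t ≤ N, |P t| ≤ ρ t * (1 + Φ t + |W t|) + κ t * |Ψ t|
  κ_nonneg : ∀ t ≤ N, 0 ≤ κ t
  κ_sq_le : ∀ t ≤ N, κ t ^ 2 ≤ ρ t
  hasDerivAt_U : ∀ t ≤ N, HasDerivAt U (ρ t) t
  U_nonneg : ∀ t ≤ N, 0 ≤ U t
  tendsto_ρ : Tendsto ρ atBot (nhds 0)

namespace PerturbedFlow

variable {m M N N' B : ℝ} {Φ W Ψ P ρ κ U : ℝ → ℝ}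

lemma mono (S : PerturbedFlow m M N Φ W Ψ P ρ κ U) (hN : N' ≤ N) :
    PerturbedFlow m M N' Φ W Ψ P ρ κ U where
  lower_pos := S.lower_pos
  mem_Icc t ht := S.mem_Icc t (ht.trans hN)
  hasDerivAt_Φ t ht := S.hasDerivAt_Φ t (ht.trans hN)
  hasDerivAt_W t ht := S.hasDerivAt_W t (ht.trans hN)
  hasDerivAt_Ψ t ht := S.hasDerivAt_Ψ t (ht.trans hN)
  abs_le t ht := S.abs_le t (ht.trans hN)
  κ_nonneg t ht := S.κ_nonneg t (ht.trans hN)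
  κ_sq_le t ht := S.κ_sq_le t (ht.trans hN)
  hasDerivAt_U t ht := S.hasDerivAt_U t (ht.trans hN)
  U_nonneg t ht := S.U_nonneg t (ht.trans hN)
  tendsto_ρ := S.tendsto_ρ

lemma pos (S : PerturbedFlow m M N Φ W Ψ P ρ κ U) {t : ℝ} (ht : t ≤ N) : 0 < Φ t :=
  S.lower_pos.trans_le (S.mem_Icc t ht).1

lemma ρ_nonneg (S : PerturbedFlow m M N Φ W Ψ P ρ κ U) {t : ℝ} (ht : t ≤ N) : 0 ≤ ρ t :=
  (sq_nonneg _).trans (S.κ_sq_le t ht)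

lemma tendsto_κ (S : PerturbedFlow m M N Φ W Ψ P ρ κ U) : Tendsto κ atBot (nhds 0) := by
  have hsqrt : Tendsto (fun t => √(ρ t)) atBot (nhds 0) := by
    simpa using S.tendsto_ρ.sqrt
  refine tendsto_of_tendsto_of_tendsto_of_le_of_le' tendsto_const_nhds hsqrt ?_ ?_
  · filter_upwards [eventually_le_atBot N] with t ht using S.κ_nonneg t ht
  · filter_upwards [eventually_le_atBot N] with t ht using Real.le_sqrt_of_sq_le (S.κ_sq_le t ht)

lemma abs_force_le (S : PerturbedFlow m M N Φ W Ψ P ρ κ U) {t : ℝ} (ht : t ≤ N) :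
    |1 / Φ t ^ 3 - 1| ≤ 1 / m ^ 3 + 1 := by
  have hm := S.lower_pos
  have hΦ := S.pos ht
  have hle : 1 / Φ t ^ 3 ≤ 1 / m ^ 3 := by
    have := (S.mem_Icc t ht).1
    gcongr
  have : 0 < 1 / Φ t ^ 3 := by positivity
  rw [_root_.abs_le]
  constructor <;> linarith

lemma exists_abs_le (S : PerturbedFlow m M N Φ W Ψ P ρ κ U) :
    ∃ B, ∃ N' ≤ N, ∀ t ≤ N', |W t| ≤ B ∧ |Ψ t| ≤ B := by
  obtain ⟨R, hR⟩ := eventually_atBot.1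
    ((S.tendsto_ρ.eventually_le_const (show (0 : ℝ) < 1 / 100 by norm_num)).and
      (S.tendsto_κ.eventually_le_const (show (0 : ℝ) < 1 / 100 by norm_num)))
  refine ⟨max (10 * M + 12 * (1 / m ^ 3 + 2 + M)) (3 * M + 4 * (1 / m ^ 3 + 2 + M)),
    min N R - 3, by linarith [min_le_left N R], fun t ht => ?_⟩
  have hIcc : ∀ x ∈ Icc t (t + 3), x ≤ N ∧ x ≤ R := fun x hx => le_min_iff.1 (by linarith [hx.2])
  refine (abs_derivs_le_of_abs_third_deriv_le (f₃ := fun t => 1 / Φ t ^ 3 - 1 - P t)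
    (fun x hx => S.hasDerivAt_Φ x (hIcc x hx).1) (fun x hx => S.hasDerivAt_W x (hIcc x hx).1)
    (fun x hx => S.hasDerivAt_Ψ x (hIcc x hx).1)
    (fun x hx => ⟨(S.pos (hIcc x hx).1).le, (S.mem_Icc x (hIcc x hx).1).2⟩) fun x hx => ?_).imp
    (le_max_of_le_left ·) (le_max_of_le_right ·)
  obtain ⟨hxN, hxR⟩ := hIcc x hx
  obtain ⟨hρ, hκ⟩ := hR x hxR
  have hΦ := S.pos hxN
  have hΦM := (S.mem_Icc x hxN).2
  calc |1 / Φ x ^ 3 - 1 - P x| ≤ |1 / Φ x ^ 3 - 1| + |P x| := abs_sub _ _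
    _ ≤ 1 / m ^ 3 + 1 + (ρ x * (1 + Φ x + |W x|) + κ x * |Ψ x|) :=
        add_le_add (S.abs_force_le hxN) (S.abs_le x hxN)
    _ ≤ 1 / m ^ 3 + 1 + (1 / 100 * (1 + M + |W x|) + 1 / 100 * |Ψ x|) := by gcongr
    _ ≤ 1 / m ^ 3 + 2 + M + (|W x| + |Ψ x|) / 100 := by linarith

lemma hasDerivAt_energy (S : PerturbedFlow m M N Φ W Ψ P ρ κ U) (K : ℝ)
    {t : ℝ} (ht : t ≤ N) :
    HasDerivAt (fun t => W t * Ψ t + Φ t + 1 / (2 * Φ t ^ 2) + K * U t)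
      (Ψ t ^ 2 + (K * ρ t - W t * P t)) t := by
  have hΦ := S.hasDerivAt_Φ t ht
  have h := ((((S.hasDerivAt_W t ht).mul (S.hasDerivAt_Ψ t ht)).add hΦ).add
    (hasDerivAt_one_div_two_mul_sq hΦ (S.pos ht).ne')).add ((S.hasDerivAt_U t ht).const_mul K)
  exact h.congr_deriv (by ring)

section BoundedDerivatives

variable (S : PerturbedFlow m M N Φ W Ψ P ρ κ U) (hB : ∀ t ≤ N, |W t| ≤ B ∧ |Ψ t| ≤ B)

include S hB

lemma tendsto_P : Tendsto P atBot (nhds 0) := by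
  have hbound : Tendsto (fun t => ρ t * (1 + M + B) + κ t * B) atBot (nhds 0) := by
    simpa using (S.tendsto_ρ.mul_const (1 + M + B)).add (S.tendsto_κ.mul_const B)
  refine squeeze_zero_norm' ?_ hbound
  filter_upwards [eventually_le_atBot N] with t ht
  have hρ := S.ρ_nonneg ht
  have hκ := S.κ_nonneg t ht
  have hΦM := (S.mem_Icc t ht).2
  obtain ⟨hW, hΨ⟩ := hB t ht
  exact (S.abs_le t ht).trans (by gcongr)

lemma exists_abs_force_le : ∃ C, ∃ N' ≤ N, ∀ t ≤ N', |1 / Φ t ^ 3 - 1 - P t| ≤ C := by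
  obtain ⟨R, hR⟩ := eventually_atBot.1
    ((S.tendsto_P hB).abs.eventually_le_const (show |(0 : ℝ)| < 1 by norm_num))
  refine ⟨1 / m ^ 3 + 1 + 1, min N R, min_le_left _ _, fun t ht => ?_⟩
  obtain ⟨htN, htR⟩ := le_min_iff.1 ht
  exact (abs_sub _ _).trans (add_le_add (S.abs_force_le htN) (hR t htR))

lemma energy_deriv_nonneg {t : ℝ} (ht : t ≤ N) :
    0 ≤ Ψ t ^ 2 + ((B * (1 + M + B) + B ^ 2) * ρ t - W t * P t) := by
  obtain ⟨hW, -⟩ := hB t ht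
  have hB₀ : 0 ≤ B := (abs_nonneg _).trans hW
  have hρ := S.ρ_nonneg ht
  have hWP : W t * P t ≤ B * (ρ t * (1 + M + B) + κ t * |Ψ t|) := by
    refine (le_abs_self _).trans ((abs_mul _ _).trans_le ?_)
    have hΦM := (S.mem_Icc t ht).2
    refine mul_le_mul hW ((S.abs_le t ht).trans ?_) (abs_nonneg _) hB₀
    gcongr
  have hcross : B * (κ t * |Ψ t|) ≤ B ^ 2 * ρ t + Ψ t ^ 2 := by
    have hκ : B ^ 2 * κ t ^ 2 ≤ B ^ 2 * ρ t := by gcongr; exact S.κ_sq_le t ht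
    nlinarith [sq_abs (Ψ t), sq_nonneg (B * κ t - |Ψ t|), sq_nonneg (B * κ t + |Ψ t|)]
  linarith

lemma exists_tendsto_energy : ∃ l, Tendsto
    (fun t => W t * Ψ t + Φ t + 1 / (2 * Φ t ^ 2) + (B * (1 + M + B) + B ^ 2) * U t)
    atBot (nhds l) := by
  refine exists_tendsto_atBot_of_hasDerivAt_nonneg (b := -(B * B))
    (fun t ht => S.hasDerivAt_energy _ ht) (fun t ht => S.energy_deriv_nonneg hB ht) fun t ht => ?_
  obtain ⟨hW, hΨ⟩ := hB t ht
  have hB₀ : 0 ≤ B := (abs_nonneg _).trans hW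
  have hΦ := S.pos ht
  have hM : 0 < M := hΦ.trans_le (S.mem_Icc t ht).2
  have hWΨ : -(B * B) ≤ W t * Ψ t :=
    (_root_.abs_le.1 ((abs_mul _ _).trans_le (mul_le_mul hW hΨ (abs_nonneg _) hB₀))).1
  have hinv : 0 < 1 / (2 * Φ t ^ 2) := by positivity
  have hU : 0 ≤ (B * (1 + M + B) + B ^ 2) * U t := mul_nonneg (by positivity) (S.U_nonneg t ht)
  linarith

lemma tendsto_Ψ : Tendsto Ψ atBot (nhds 0) := by
  obtain ⟨l, hl⟩ := S.exists_tendsto_energy hB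
  obtain ⟨C, N', hN', hC⟩ := S.exists_abs_force_le hB
  have hWP : Tendsto (fun t => W t * P t) atBot (nhds 0) := by
    refine squeeze_zero_norm' ?_ (by simpa using (S.tendsto_P hB).abs.const_mul B)
    filter_upwards [eventually_le_atBot N] with t ht
    rw [norm_mul]
    exact mul_le_mul_of_nonneg_right (hB t ht).1 (norm_nonneg _)
  have herr : Tendsto (fun t => (B * (1 + M + B) + B ^ 2) * ρ t - W t * P t) atBot (nhds 0) := by
    simpa using (S.tendsto_ρ.const_mul (B * (1 + M + B) + B ^ 2)).sub hWP
  have hunif : UniformContinuousOn (fun t => Ψ t ^ 2) (Iic N') := by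
    refine uniformContinuousOn_Iic_of_abs_hasDerivAt_le (B := 2 * B * C)
      (fun t ht => (S.hasDerivAt_Ψ t (ht.trans hN')).fun_pow 2) fun t ht => ?_
    obtain ⟨hW, hΨ⟩ := hB t (ht.trans hN')
    have hB₀ : 0 ≤ B := (abs_nonneg _).trans hW
    rw [abs_mul, abs_mul]
    simp only [Nat.cast_ofNat, Nat.abs_ofNat, Nat.add_one_sub_one, pow_one]
    gcongr
    exact hC t ht
  have hsq := tendsto_zero_of_hasDerivAt_uniformContinuousOn_add
    (fun t ht => S.hasDerivAt_energy _ (ht.trans hN')) hl herr hunif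
  exact tendsto_zero_iff_abs_tendsto_zero _ |>.2 (by
    simpa [Function.comp_def, Real.sqrt_sq_eq_abs] using hsq.sqrt)

lemma tendsto_Φ : Tendsto Φ atBot (nhds 1) := by
  have hm := S.lower_pos
  have hunif : UniformContinuousOn (fun t => 1 / Φ t ^ 3 - 1) (Iic N) := by
    refine uniformContinuousOn_Iic_of_abs_hasDerivAt_le (B := 3 * B / m ^ 4) (fun t ht =>
      (hasDerivAt_one_div_pow (S.hasDerivAt_Φ t ht) (S.pos ht).ne' 3).sub_const 1) fun t ht => ?_
    have hmΦ := (S.mem_Icc t ht).1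
    have hΦ := S.pos ht
    obtain ⟨hW, -⟩ := hB t ht
    have hB₀ : 0 ≤ B := (abs_nonneg _).trans hW
    rw [abs_div, abs_neg, abs_mul, abs_of_pos (pow_pos hΦ _)]
    simp only [Nat.cast_ofNat, Nat.abs_ofNat]
    gcongr
  have hforce := tendsto_zero_of_hasDerivAt_uniformContinuousOn_add
    (r := fun t => -P t) (fun t ht => (S.hasDerivAt_Ψ t ht).congr_deriv (sub_eq_add_neg _ _))
    (S.tendsto_Ψ hB) (by simpa using (S.tendsto_P hB).neg) hunif
  have hcube : Tendsto (fun t => 1 / Φ t ^ 3) atBot (nhds 1) := by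
    simpa using hforce.add_const 1
  have hroot : Tendsto (fun t => (1 / Φ t ^ 3) ^ (-(1 / 3) : ℝ)) atBot (nhds 1) := by
    simpa using hcube.rpow_const (p := -(1 / 3)) (.inl one_ne_zero)
  refine hroot.congr' ?_
  filter_upwards [eventually_le_atBot N] with t ht
  rw [one_div, Real.inv_rpow (pow_pos (S.pos ht) 3).le, Real.rpow_neg (pow_pos (S.pos ht) 3).le,
    inv_inv, ← Real.rpow_natCast, ← Real.rpow_mul (S.pos ht).le]
  norm_num

lemma tendsto_W : Tendsto W atBot (nhds 0) :=
  tendsto_zero_of_hasDerivAt_uniformContinuousOn_add (r := 0)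
    (fun t ht => (S.hasDerivAt_Φ t ht).congr_deriv (add_zero _).symm) (S.tendsto_Φ hB)
    tendsto_const_nhds
    (uniformContinuousOn_Iic_of_abs_hasDerivAt_le S.hasDerivAt_W fun t ht => (hB t ht).2)

end BoundedDerivatives

theorem tendsto (S : PerturbedFlow m M N Φ W Ψ P ρ κ U) :
    Tendsto (fun t => (Φ t, W t, Ψ t)) atBot (nhds (1, 0, 0)) := by
  obtain ⟨B, N', hN', hB⟩ := S.exists_abs_le
  have S' := S.mono hN'
  exact (S'.tendsto_Φ hB).prodMk_nhds ((S'.tendsto_W hB).prodMk_nhds (S'.tendsto_Ψ hB))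

end PerturbedFlow

/-! ### Thin-film profiles -/

section Taylor

variable {f f₁ f₂ f₃ : ℝ → ℝ} {a b c : ℝ}

lemma le_taylor_right_of_second_deriv_le (hab : a ≤ b) (hf : ∀ x ∈ Icc a b, HasDerivAt f (f₁ x) x)
    (hf₁ : ∀ x ∈ Icc a b, HasDerivAt f₁ (f₂ x) x) (hf₂ : ∀ x ∈ Icc a b, f₂ x ≤ c) :
    f a ≤ f b - f₁ b * (b - a) + c * (b - a) ^ 2 / 2 := by
  have hf₁_ge : ∀ x ∈ Icc a b, f₁ b - c * (b - x) ≤ f₁ x := fun x hx => by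
    have hsub : Icc x b ⊆ Icc a b := Icc_subset_Icc_left hx.1
    have h := sub_le_sub_of_hasDerivAt_le hx.2 (fun y hy => hf₁ y (hsub hy))
      (fun y _ => (hasDerivAt_id y).const_mul c)
      fun y hy => by simpa using hf₂ y (hsub (Ioo_subset_Icc_self hy))
    simp only [id] at h
    linarith
  have h := sub_le_sub_of_hasDerivAt_le hab
    (fun x _ => ((hasDerivAt_id x).const_mul (f₁ b)).add
      ((((hasDerivAt_id x).const_sub b).pow 2).const_mul (c / 2))) hf fun x hx => by
        refine le_trans (le_of_eq ?_) (hf₁_ge x (Ioo_subset_Icc_self hx))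
        simp only [id]
        ring
  simp only [Pi.add_apply, Pi.pow_apply, id, sub_self] at h
  linarith

/-- Since `f'' ≤ -κ (b - x)`, the slope `f' a ≥ κ (b - a) ^ 2 / 2` controls the length of the
interval, hence the rise `f b - f a ≤ (b - a) f' a`. -/
lemma mul_sq_rise_le_of_le_third_deriv {κ : ℝ} (hκ : 0 ≤ κ) (hab : a ≤ b)
    (hf : ∀ x ∈ Icc a b, HasDerivAt f (f₁ x) x) (hf₁ : ∀ x ∈ Icc a b, HasDerivAt f₁ (f₂ x) x)
    (hf₂ : ∀ x ∈ Icc a b, HasDerivAt f₂ (f₃ x) x) (hf₃ : ∀ x ∈ Ioo a b, κ ≤ f₃ x)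
    (hf₁b : 0 ≤ f₁ b) (hf₂b : f₂ b ≤ 0) : κ * (f b - f a) ^ 2 ≤ 2 * f₁ a ^ 3 := by
  have hf₂_le : ∀ x ∈ Icc a b, f₂ x ≤ -κ * (b - x) := fun x hx => by
    have hsub : Icc x b ⊆ Icc a b := Icc_subset_Icc_left hx.1
    have h := sub_le_sub_of_hasDerivAt_le hx.2 (fun y _ => (hasDerivAt_id y).const_mul κ)
      (fun y hy => hf₂ y (hsub hy))
      fun y hy => by simpa using hf₃ y ⟨hx.1.trans_lt hy.1, hy.2⟩
    simp only [id] at h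
    linarith
  have hf₁_ge : ∀ x ∈ Icc a b, κ / 2 * (b - x) ^ 2 ≤ f₁ x := fun x hx => by
    have hsub : Icc x b ⊆ Icc a b := Icc_subset_Icc_left hx.1
    have h := sub_le_sub_of_hasDerivAt_le hx.2 (fun y hy => hf₁ y (hsub hy))
      (fun y _ => (((hasDerivAt_id y).const_sub b).pow 2).const_mul (κ / 2)) fun y hy => by
        refine (hf₂_le y (hsub (Ioo_subset_Icc_self hy))).trans (le_of_eq ?_)
        simp only [id]
        ring
    simp only [Pi.pow_apply, id, sub_self] at h
    linarith
  have hf₁_le : ∀ x ∈ Icc a b, f₁ x ≤ f₁ a := fun x hx => by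
    have h := sub_le_sub_of_hasDerivAt_le hx.1
      (fun y hy => hf₁ y ⟨hy.1, hy.2.trans hx.2⟩) (fun y _ => hasDerivAt_const y (0 : ℝ))
      fun y hy => (hf₂_le y ⟨hy.1.le, hy.2.le.trans hx.2⟩).trans
        (by nlinarith [hy.2, hx.2])
    linarith
  have hrise_nonneg : f a ≤ f b := le_of_hasDerivAt_nonneg hab hf fun x hx =>
    (by positivity : 0 ≤ κ / 2 * (b - x) ^ 2).trans (hf₁_ge x (Ioo_subset_Icc_self hx))
  have hrise_le : f b - f a ≤ f₁ a * (b - a) := by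
    have h := sub_le_sub_of_hasDerivAt_le hab hf
      (fun y _ => (hasDerivAt_id y).const_mul (f₁ a))
      fun y hy => by simpa using hf₁_le y (Ioo_subset_Icc_self hy)
    simpa [mul_sub] using h
  have hv := hf₁_ge a (left_mem_Icc.2 hab)
  calc κ * (f b - f a) ^ 2 ≤ κ * (f₁ a * (b - a)) ^ 2 := by
        have : 0 ≤ f b - f a := sub_nonneg.2 hrise_nonneg
        gcongr
    _ = 2 * (f₁ a ^ 2 * (κ / 2 * (b - a) ^ 2)) := by ring
    _ ≤ 2 * (f₁ a ^ 2 * f₁ a) := by gcongr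
    _ = 2 * f₁ a ^ 3 := by ring

end Taylor

lemma one_div_cube_le_of_mul_le {g q H c : ℝ} (hg : q ^ 3 * g = 1) (hq : 0 < q) (hc : 0 < c)
    (h : c * q ≤ H) : 1 / H ^ 3 ≤ g / c ^ 3 := by
  have hg' : g = 1 / q ^ 3 := by field_simp; linarith
  calc 1 / H ^ 3 ≤ 1 / (c * q) ^ 3 := by gcongr
    _ = g / c ^ 3 := by rw [hg', mul_pow]; field_simp

/-- `H`, with derivatives `H₁` and `H₂`, is a positive solution on `[x₀, ∞)` of the film equation
`H''' = g - 1 / H ^ 3` with forcing `g`. -/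
structure ForcedProfile (g : ℝ → ℝ) (x₀ : ℝ) (H H₁ H₂ : ℝ → ℝ) : Prop where
  pos : ∀ x ≥ x₀, 0 < H x
  hasDerivAt₀ : ∀ x ≥ x₀, HasDerivAt H (H₁ x) x
  hasDerivAt₁ : ∀ x ≥ x₀, HasDerivAt H₁ (H₂ x) x
  hasDerivAt₂ : ∀ x ≥ x₀, HasDerivAt H₂ (g x - 1 / H x ^ 3) x

/-- Otherwise `H''' ≤ -7` near infinity, which drives `H` to `-∞`. -/
lemma ForcedProfile.frequently_le_mul_cube {g H H₁ H₂ : ℝ → ℝ} {x₀ : ℝ}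
    (S : ForcedProfile g x₀ H H₁ H₂) (hg : ∀ x ≥ x₀, 1 ≤ g x) :
    ∃ᶠ x in atTop, 1 / 8 ≤ g x * H x ^ 3 := by
  by_contra hnot
  simp only [not_frequently, not_le] at hnot
  obtain ⟨b, hb⟩ := eventually_atTop.1 hnot
  have hcrash : Tendsto H atTop atBot :=
    tendsto_atBot_of_third_hasDerivAt_le_neg (a := max x₀ b) (c := -7) (by norm_num)
      (fun x hx => S.hasDerivAt₀ x (le_of_max_le_left hx))
      (fun x hx => S.hasDerivAt₁ x (le_of_max_le_left hx))
      (fun x hx => S.hasDerivAt₂ x (le_of_max_le_left hx)) fun x hx => by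
        have hH := S.pos x (le_of_max_le_left hx)
        have hinv : 8 * g x ≤ 1 / H x ^ 3 := by
          rw [le_div_iff₀ (by positivity)]
          linarith [hb x (le_of_max_le_right hx)]
        linarith [hg x (le_of_max_le_left hx)]
  obtain ⟨x, hxneg, hx⟩ := ((hcrash.eventually_lt_atBot 0).and (eventually_ge_atTop x₀)).exists
  exact (S.pos x hx).not_gt hxneg

section Equilibrium

/-- The stationary film height `(x ^ 2 + a) ^ (-1 / 3)`, at which the forcing `x ^ 2 + a` balances
`1 / H ^ 3`. -/
noncomputable def equilibrium (a x : ℝ) : ℝ := (x ^ 2 + a) ^ (-(1 / 3) : ℝ)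

/-- A position beyond which `a` is negligible compared with `x ^ 2`. -/
noncomputable def farField (a : ℝ) : ℝ := 200 * (|a| + 1)

variable {a x : ℝ}

lemma one_le_of_farField_le (hx : farField a ≤ x) : 1 ≤ x := by
  unfold farField at hx
  linarith [abs_nonneg a]

lemma hundred_mul_le_sq (hx : farField a ≤ x) : 100 * |a| + 100 ≤ x ^ 2 + a := by
  have hx₁ := one_le_of_farField_le hx
  unfold farField at hx
  nlinarith [abs_nonneg a, neg_abs_le a]

lemma one_le_forcing (hx : farField a ≤ x) : 1 ≤ x ^ 2 + a := by
  linarith [hundred_mul_le_sq hx, abs_nonneg a]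

lemma half_sq_le_forcing (hx : farField a ≤ x) : x ^ 2 / 2 ≤ x ^ 2 + a := by
  linarith [hundred_mul_le_sq hx, neg_abs_le a, abs_nonneg a]

lemma forcing_le_two_mul_sq (hx : farField a ≤ x) : x ^ 2 + a ≤ 2 * x ^ 2 := by
  linarith [hundred_mul_le_sq hx, le_abs_self a, abs_nonneg a]

lemma equilibrium_pos (hx : farField a ≤ x) : 0 < equilibrium a x :=
  Real.rpow_pos_of_pos (by linarith [one_le_forcing hx]) _

lemma equilibrium_le_one (hx : farField a ≤ x) : equilibrium a x ≤ 1 :=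
  Real.rpow_le_one_of_one_le_of_nonpos (one_le_forcing hx) (by norm_num)

lemma equilibrium_cube_mul (hx : farField a ≤ x) : equilibrium a x ^ 3 * (x ^ 2 + a) = 1 := by
  have hg : 0 < x ^ 2 + a := by linarith [one_le_forcing hx]
  rw [equilibrium, ← Real.rpow_natCast, ← Real.rpow_mul hg.le, ← Real.rpow_add_one hg.ne']
  norm_num

lemma sq_mul_equilibrium_cube_mem_Icc (hx : farField a ≤ x) :
    x ^ 2 * equilibrium a x ^ 3 ∈ Icc (99 / 100 : ℝ) (101 / 100) := by
  have hq := pow_pos (equilibrium_pos hx) 3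
  have hqg := equilibrium_cube_mul hx
  have hg := hundred_mul_le_sq hx
  constructor <;> nlinarith [neg_abs_le a, le_abs_self a]

lemma equilibrium_antitoneOn : AntitoneOn (equilibrium a) (Ici (farField a)) := fun x hx y _ hxy =>
  Real.rpow_le_rpow_of_nonpos (by linarith [one_le_forcing hx])
    (by nlinarith [one_le_of_farField_le hx]) (by norm_num)

lemma hasDerivAt_equilibrium (hx : farField a ≤ x) :
    HasDerivAt (equilibrium a) (-(2 / 3) * x * equilibrium a x ^ 4) x := by
  have hg : 0 < x ^ 2 + a := by linarith [one_le_forcing hx]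
  have hpow : equilibrium a x ^ 4 = (x ^ 2 + a) ^ (-(1 / 3) - 1 : ℝ) := by
    rw [equilibrium, ← Real.rpow_natCast, ← Real.rpow_mul hg.le]
    norm_num
  refine (((hasDerivAt_pow 2 x).add_const a).rpow_const (.inl hg.ne')).congr_deriv ?_
  rw [hpow]
  push_cast
  ring

lemma tendsto_equilibrium : Tendsto (equilibrium a) atTop (nhds 0) :=
  (tendsto_rpow_neg_atTop (by norm_num : (0 : ℝ) < 1 / 3)).comp
    (tendsto_atTop_add_const_right _ a (tendsto_pow_atTop two_ne_zero))

lemma equilibrium_mem_Icc_of_cube_mul_eq_one {v : ℝ} (hx : farField a ≤ x) (hv : 0 < v)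
    (hvx : v ^ 3 * (x ^ 2 + 1) = 1) : equilibrium a x ∈ Icc (v / 2) (2 * v) := by
  have hq := equilibrium_pos hx
  have hqg := equilibrium_cube_mul hx
  have hg := hundred_mul_le_sq hx
  have habs := abs_nonneg a
  have hv₃ := pow_pos hv 3
  have hq₃ := pow_pos hq 3
  constructor
  · refine le_of_pow_le_pow_left₀ three_ne_zero hq.le ?_
    rw [div_pow]
    nlinarith [neg_abs_le a, le_abs_self a]
  · refine le_of_pow_le_pow_left₀ three_ne_zero (by positivity) ?_
    rw [mul_pow]
    nlinarith [neg_abs_le a, le_abs_self a]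

end Equilibrium

namespace ForcedProfile

variable {a : ℝ} {H H₁ H₂ : ℝ → ℝ}

section Growth

lemma third_deriv_nonneg_of_equilibrium_le {x : ℝ} (hx : farField a ≤ x)
    (h : equilibrium a x ≤ H x) : 0 ≤ x ^ 2 + a - 1 / H x ^ 3 := by
  have := one_div_cube_le_of_mul_le (equilibrium_cube_mul hx) (equilibrium_pos hx) one_pos
    (by linarith : 1 * equilibrium a x ≤ H x)
  linarith

variable (S : ForcedProfile (fun x => x ^ 2 + a) (farField a) H H₁ H₂)

include S

lemma third_deriv_le {x : ℝ} (hx : farField a ≤ x) : x ^ 2 + a - 1 / H x ^ 3 ≤ 2 * x ^ 2 := by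
  have hH := S.pos x hx
  have : 0 < 1 / H x ^ 3 := by positivity
  linarith [forcing_le_two_mul_sq hx]

lemma second_deriv_le {x : ℝ} (hx : farField a ≤ x) :
    H₂ x ≤ (|H₂ (farField a)| + 1) * x ^ 3 := by
  have h := sub_le_sub_of_hasDerivAt_le hx (fun y hy => S.hasDerivAt₂ y hy.1)
    (fun y _ => hasDerivAt_pow 3 y) fun y hy =>
      (S.third_deriv_le hy.1.le).trans (by norm_num; nlinarith [sq_nonneg y])
  have hx₃ : 1 ≤ x ^ 3 := one_le_pow₀ (one_le_of_farField_le hx)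
  have hfar : 0 ≤ farField a ^ 3 := by unfold farField; positivity
  nlinarith [abs_nonneg (H₂ (farField a)), le_abs_self (H₂ (farField a))]

/-- Otherwise `H`, `H₁` and `H₂` would keep increasing forever, since `H''' ≥ 0` above the
decreasing equilibrium, whereas `H` returns to a multiple of the equilibrium. -/
lemma second_deriv_nonpos_of_rising {M : ℝ} (hfreq : ∃ᶠ x in atTop, H x ≤ M * equilibrium a x)
    {x : ℝ} (hx : farField a ≤ x) (h : equilibrium a x < H x) (h₁ : 0 ≤ H₁ x) : H₂ x ≤ 0 := by
  by_contra! h₂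
  have hrise : ∀ y ≥ x, (∀ s ∈ Ico x y, 0 < H s - equilibrium a s) → H x ≤ H y := by
    intro y hy hs
    have hH₂ : ∀ t ∈ Icc x y, 0 ≤ H₂ t := fun t ht =>
      h₂.le.trans (le_of_hasDerivAt_nonneg ht.1 (fun s hs => S.hasDerivAt₂ s (hx.trans hs.1))
        fun s hst => third_deriv_nonneg_of_equilibrium_le (hx.trans hst.1.le)
          (sub_pos.1 (hs s ⟨hst.1.le, hst.2.trans_le ht.2⟩)).le)
    have hH₁ : ∀ t ∈ Icc x y, 0 ≤ H₁ t := fun t ht =>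
      h₁.trans (le_of_hasDerivAt_nonneg ht.1 (fun s hs => S.hasDerivAt₁ s (hx.trans hs.1))
        fun s hst => hH₂ s ⟨hst.1.le, hst.2.le.trans ht.2⟩)
    exact le_of_hasDerivAt_nonneg hy (fun s hs => S.hasDerivAt₀ s (hx.trans hs.1))
      fun s hs => hH₁ s (Ioo_subset_Icc_self hs)
  have habove : ∀ y ≥ x, 0 < H y - equilibrium a y :=
    pos_of_forall_Ico_pos (HasDerivAt.continuousOn fun s hs =>
      (S.hasDerivAt₀ s (hx.trans hs)).sub (hasDerivAt_equilibrium (hx.trans hs)))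
      fun y hy hs => by
        linarith [hrise y hy hs, equilibrium_antitoneOn hx (hx.trans hy) hy]
  have hsmall : ∀ᶠ y in atTop, M * equilibrium a y < H x := by
    have hlim : Tendsto (fun y => M * equilibrium a y) atTop (nhds 0) := by
      simpa using tendsto_equilibrium.const_mul M
    exact hlim.eventually_lt_const (S.pos x hx)
  obtain ⟨y, hyM, hy, hxy⟩ := (hfreq.and_eventually (hsmall.and (eventually_ge_atTop x))).exists
  linarith [hrise y hxy fun s hs => habove s hs.1]

/-- Taylor expansion from `x` back to `x - 1 / x`, where `H` is still positive. -/
lemma first_deriv_le {x A : ℝ} (hx : farField a + 1 ≤ x) (hA : 0 ≤ A) (hHA : H x ≤ A) :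
    H₁ x ≤ (A + (|H₂ (farField a)| + 1) / 2) * x ^ 2 := by
  set C := |H₂ (farField a)| + 1
  have hx₁ : 1 ≤ x := one_le_of_farField_le (by linarith : farField a ≤ x)
  have hinv : x⁻¹ ≤ 1 := inv_le_one_of_one_le₀ hx₁
  have hinv₀ : 0 < x⁻¹ := by positivity
  have hC : 0 < C := by positivity
  have hfar : ∀ y ∈ Icc (x - x⁻¹) x, farField a ≤ y := fun y hy => by linarith [hy.1]
  have htaylor := le_taylor_right_of_second_deriv_le (c := C * x ^ 3) (sub_le_self x hinv₀.le)
    (fun y hy => S.hasDerivAt₀ y (hfar y hy)) (fun y hy => S.hasDerivAt₁ y (hfar y hy))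
    fun y hy => (S.second_deriv_le (hfar y hy)).trans (by
      have := hy.2
      have := one_le_of_farField_le (hfar y hy)
      gcongr)
  have hpos := S.pos _ (hfar _ (left_mem_Icc.2 (sub_le_self x hinv₀.le)))
  rw [sub_sub_cancel] at htaylor
  have hslope : H₁ x * x⁻¹ ≤ A + C / 2 * x := by
    have : C * x ^ 3 * x⁻¹ ^ 2 / 2 = C / 2 * x := by field_simp
    linarith
  calc H₁ x = H₁ x * x⁻¹ * x := by field_simp
    _ ≤ (A + C / 2 * x) * x := by gcongr
    _ ≤ (A + C / 2) * x ^ 2 := by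
        have : x ≤ x ^ 2 := by nlinarith
        nlinarith

lemma rise_le {x b V : ℝ} (hx : farField a ≤ x) (hxb : x ≤ b)
    (habove : ∀ s ∈ Ioc x b, 2 * equilibrium a s ≤ H s) (hV : 0 ≤ V) (hx₁ : H₁ x ≤ V * x ^ 2)
    (hb₁ : 0 ≤ H₁ b) (hb₂ : H₂ b ≤ 0) : H b - H x ≤ (8 * V ^ 3 + 1) * x ^ 2 := by
  have hx₀ := one_le_of_farField_le hx
  have hrise := mul_sq_rise_le_of_le_third_deriv (κ := x ^ 2 / 4) (by positivity) hxb
    (fun s hs => S.hasDerivAt₀ s (hx.trans hs.1)) (fun s hs => S.hasDerivAt₁ s (hx.trans hs.1))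
    (fun s hs => S.hasDerivAt₂ s (hx.trans hs.1)) (fun s hs => by
      have hs₀ := hx.trans hs.1.le
      have := one_div_cube_le_of_mul_le (equilibrium_cube_mul hs₀) (equilibrium_pos hs₀) two_pos
        (habove s (Ioo_subset_Ioc_self hs))
      nlinarith [half_sq_le_forcing hs₀, hs.1]) hb₁ hb₂
  have hcube : H₁ x ^ 3 ≤ (V * x ^ 2) ^ 3 := (Odd.strictMono_pow (by decide)).monotone hx₁
  have hsq : (H b - H x) ^ 2 ≤ 8 * V ^ 3 * (x ^ 2) ^ 2 := by
    refine le_of_mul_le_mul_left ?_ (by positivity : 0 < x ^ 2 / 4)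
    linarith
  refine abs_le_of_sq_le_sq' (hsq.trans ?_) (by positivity) |>.2
  rw [mul_pow]
  gcongr
  nlinarith [pow_nonneg hV 3]

/-- Beyond the last point `x ≤ b` where `H ≤ A` or `H ≤ 2 q`, the slope bound at `x` limits how far
`H` can rise. -/
lemma le_mul_sq_of_isMaxOn {M A b : ℝ} (hfreq : ∃ᶠ x in atTop, H x ≤ M * equilibrium a x)
    (hb : farField a + 1 ≤ b) (hmax : IsMaxOn H (Icc (farField a + 1) b) b) (hA : 2 ≤ A)
    (hA₁ : H (farField a + 1) ≤ A) :
    H b ≤ (A + (8 * (A + (|H₂ (farField a)| + 1) / 2) ^ 3 + 1)) * b ^ 2 := by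
  set V := A + (|H₂ (farField a)| + 1) / 2
  have hV : 0 ≤ V := by positivity
  have hfar : ∀ x ≥ farField a + 1, farField a ≤ x := fun x hx => by linarith
  have hcont : ContinuousOn (fun x => H x - max (2 * equilibrium a x) A) (Icc (farField a + 1) b) :=
    ContinuousOn.sub (HasDerivAt.continuousOn fun x hx => S.hasDerivAt₀ x (hfar x hx.1))
      (((HasDerivAt.continuousOn fun x hx => hasDerivAt_equilibrium (hfar x hx.1)).const_mul 2).sup
        continuousOn_const)
  obtain ⟨x, hx, hHx, hlast⟩ :=
    exists_last_nonpos hb hcont (sub_nonpos.2 (hA₁.trans (le_max_right _ _)))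
  have hHxA : H x ≤ A := (sub_nonpos.1 hHx).trans
    (max_le (by linarith [equilibrium_le_one (hfar x hx.1)]) le_rfl)
  have hrise : H b - H x ≤ (8 * V ^ 3 + 1) * x ^ 2 := by
    rcases hx.2.eq_or_lt with rfl | hxb
    · rw [sub_self]; positivity
    have habove : ∀ s ∈ Ioc x b, 2 * equilibrium a s < H s := fun s hs =>
      (le_max_left _ _).trans_lt (sub_pos.1 (hlast s hs))
    have hb₀ := hfar b hb
    have hb₁ : 0 ≤ H₁ b :=
      nonneg_of_isMaxOn_Icc_right (hx.1.trans_lt hxb) hmax (S.hasDerivAt₀ b hb₀)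
    exact S.rise_le (hfar x hx.1) hxb.le (fun s hs => (habove s hs).le) hV
      (S.first_deriv_le hx.1 (by linarith) hHxA) hb₁ (S.second_deriv_nonpos_of_rising hfreq hb₀
        (by linarith [habove b (right_mem_Ioc.2 hxb), equilibrium_pos hb₀]) hb₁)
  have hx₀ := one_le_of_farField_le (hfar x hx.1)
  calc H b ≤ A * 1 + (8 * V ^ 3 + 1) * x ^ 2 := by linarith
    _ ≤ A * b ^ 2 + (8 * V ^ 3 + 1) * b ^ 2 := by
        gcongr
        · exact one_le_pow₀ (hx₀.trans hx.2)
        · exact hx.2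
    _ = (A + (8 * V ^ 3 + 1)) * b ^ 2 := by ring

lemma exists_le_mul_sq {M : ℝ} (hfreq : ∃ᶠ x in atTop, H x ≤ M * equilibrium a x) :
    ∃ K, ∀ x ≥ farField a + 1, H x ≤ K * x ^ 2 := by
  set A := max 2 (H (farField a + 1))
  have hA : 2 ≤ A := le_max_left _ _
  refine ⟨A + (8 * (A + (|H₂ (farField a)| + 1) / 2) ^ 3 + 1), fun y hy => ?_⟩
  have hcont : ContinuousOn H (Icc (farField a + 1) y) :=
    HasDerivAt.continuousOn fun x hx => S.hasDerivAt₀ x (by linarith [hx.1])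
  obtain ⟨b, hb, hbmax⟩ := isCompact_Icc.exists_isMaxOn (nonempty_Icc.2 hy) hcont
  have hb₀ := one_le_of_farField_le (by linarith [hb.1] : farField a ≤ b)
  refine (hbmax (right_mem_Icc.2 hy)).trans ((S.le_mul_sq_of_isMaxOn hfreq hb.1
    (hbmax.on_subset (Icc_subset_Icc_right hb.2)) hA (le_max_right _ _)).trans ?_)
  gcongr
  exact hb.2

end Growth

section Energy

/-- The scale-invariant energy `q ^ 2 (-H' H'' + (x ^ 2 + a) H + 1 / (2 H ^ 2))`, where `q` is the
equilibrium, plus lower-order terms chosen so that its derivative is a diagonal quadratic form in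
`H''`, `H'` and `H`. -/
noncomputable def energy (a : ℝ) (H H₁ H₂ : ℝ → ℝ) (x : ℝ) : ℝ :=
  equilibrium a x ^ 2 * (-H₁ x * H₂ x + (x ^ 2 + a) * H x + 1 / (2 * H x ^ 2))
    - 2 / 3 * x * equilibrium a x ^ 5 * (H x * H₂ x) - 1 / 3 * x * equilibrium a x ^ 5 * H₁ x ^ 2
    + (2 / 3 * equilibrium a x ^ 5 - 20 / 9 * x ^ 2 * equilibrium a x ^ 8) * (H x * H₁ x)
    + (10 / 3 * x * equilibrium a x ^ 8 - 160 / 27 * x ^ 3 * equilibrium a x ^ 11) * H x ^ 2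

variable {x : ℝ}

lemma le_energy_of_critical (hx : farField a ≤ x)
    (hcrit : H₁ x = -(2 / 3) * x * equilibrium a x ^ 3 * H x) :
    H x / equilibrium a x + equilibrium a x ^ 2 / (2 * H x ^ 2)
      - 7 * x ^ 3 * equilibrium a x ^ 11 * H x ^ 2 ≤ energy a H H₁ H₂ x := by
  have hq := equilibrium_pos hx
  have hx₁ := one_le_of_farField_le hx
  have hX : H x / equilibrium a x = equilibrium a x ^ 2 * (x ^ 2 + a) * H x := by
    rw [div_eq_iff hq.ne']
    linear_combination (-H x) * equilibrium_cube_mul hx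
  have hrem : 0 ≤ x * equilibrium a x ^ 8 * H x ^ 2
      * (26 / 9 + 65 / 27 * (x ^ 2 * equilibrium a x ^ 3)) := by positivity
  rw [hX, energy, hcrit]
  linear_combination hrem

/-- The error term is small because `H ≤ K x ^ 2` and `x ^ 2 q ^ 3` is close to `1`. -/
lemma error_le_half_div_equilibrium {K : ℝ} (hx : farField a ≤ x) (hH : 0 < H x)
    (hHK : H x ≤ K * x ^ 2) (hK : K * equilibrium a x ≤ 1 / 1000) :
    7 * x ^ 3 * equilibrium a x ^ 11 * H x ^ 2 ≤ H x / equilibrium a x / 2 := by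
  set q := equilibrium a x
  have hq : 0 < q := equilibrium_pos hx
  have hq₁ : q ≤ 1 := equilibrium_le_one hx
  have hx₁ := one_le_of_farField_le hx
  have hr₂ : x ^ 2 * q ^ 3 ≤ 101 / 100 := (sq_mul_equilibrium_cube_mem_Icc hx).2
  have hK₀ : 0 < K := by
    by_contra! hK'
    nlinarith [sq_nonneg x]
  calc 7 * x ^ 3 * q ^ 11 * H x ^ 2 = 7 * x ^ 3 * q ^ 12 * H x * (H x / q) := by field_simp
    _ ≤ 7 * x ^ 4 * q ^ 12 * (K * x ^ 2) * (H x / q) := by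
        gcongr
        norm_num
    _ = 7 * (x ^ 2 * q ^ 3) ^ 3 * (K * q) * q ^ 2 * (H x / q) := by ring
    _ ≤ 7 * (101 / 100) ^ 3 * (1 / 1000) * 1 ^ 2 * (H x / q) := by gcongr
    _ ≤ H x / q / 2 := by
        have : 0 < H x / q := by positivity
        linarith

variable (S : ForcedProfile (fun x => x ^ 2 + a) (farField a) H H₁ H₂)

include S

lemma hasDerivAt_energy (hx : farField a ≤ x) :
    HasDerivAt (energy a H H₁ H₂) (-equilibrium a x ^ 2 * H₂ x ^ 2
      - (10 / 9 * x ^ 2 * equilibrium a x ^ 8 - 1 / 3 * equilibrium a x ^ 5) * H₁ x ^ 2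
      + (10 / 3 * equilibrium a x ^ 8 - 320 / 9 * x ^ 2 * equilibrium a x ^ 11
        + 3520 / 81 * x ^ 4 * equilibrium a x ^ 14) * H x ^ 2) x := by
  have hq := hasDerivAt_equilibrium hx
  have h₀ := S.hasDerivAt₀ x hx
  have h₁ := S.hasDerivAt₁ x hx
  have h₂ := S.hasDerivAt₂ x hx
  have hid := hasDerivAt_id' x
  have hH := (S.pos x hx).ne'
  have h := (((((hq.fun_pow 2).mul (((h₁.neg.mul h₂).add
      (((hid.fun_pow 2).add_const a).mul h₀)).add (hasDerivAt_one_div_two_mul_sq h₀ hH))).sub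
    (((hid.const_mul (2 / 3)).mul (hq.fun_pow 5)).mul (h₀.mul h₂))).sub
    (((hid.const_mul (1 / 3)).mul (hq.fun_pow 5)).mul (h₁.fun_pow 2))).add
    ((((hq.fun_pow 5).const_mul (2 / 3)).sub
      (((hid.fun_pow 2).const_mul (20 / 9)).mul (hq.fun_pow 8))).mul (h₀.mul h₁))).add
    ((((hid.const_mul (10 / 3)).mul (hq.fun_pow 8)).sub
      (((hid.fun_pow 3).const_mul (160 / 27)).mul (hq.fun_pow 11))).mul (h₀.fun_pow 2))
  refine HasDerivAt.congr_deriv h ?_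
  have hinv : H x * (1 / H x) ^ 3 = (1 / H x) ^ 2 := by field_simp
  have e₁ : 1 / (2 * H x ^ 2) = 1 / 2 * (1 / H x) ^ 2 := by field_simp
  have e₂ : -H₁ x / H x ^ 3 = -H₁ x * (1 / H x) ^ 3 := by field_simp
  have e₃ : 1 / H x ^ 3 = (1 / H x) ^ 3 := by field_simp
  simp only [Pi.mul_apply, Pi.add_apply, Pi.neg_apply, Pi.sub_apply, Nat.cast_ofNat, e₁, e₂, e₃]
  norm_num only
  linear_combination (-2 * x * equilibrium a x ^ 2 * H x) * equilibrium_cube_mul hx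
    + (2 / 3) * x * equilibrium a x ^ 5 * hinv

lemma energy_deriv_le {K : ℝ} (hx : farField a ≤ x) (hK : H x ≤ K * x ^ 2) :
    -equilibrium a x ^ 2 * H₂ x ^ 2
      - (10 / 9 * x ^ 2 * equilibrium a x ^ 8 - 1 / 3 * equilibrium a x ^ 5) * H₁ x ^ 2
      + (10 / 3 * equilibrium a x ^ 8 - 320 / 9 * x ^ 2 * equilibrium a x ^ 11
        + 3520 / 81 * x ^ 4 * equilibrium a x ^ 14) * H x ^ 2
      ≤ 120 * K ^ 2 * equilibrium a x ^ 2 := by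
  set q := equilibrium a x
  have hq : 0 < q := equilibrium_pos hx
  have hH := S.pos x hx
  obtain ⟨hr₁, hr₂⟩ : x ^ 2 * q ^ 3 ∈ Icc (99 / 100 : ℝ) (101 / 100) :=
    sq_mul_equilibrium_cube_mem_Icc hx
  set r := x ^ 2 * q ^ 3
  have hH₂ : 0 ≤ q ^ 2 * H₂ x ^ 2 := by positivity
  have hH₁ : 0 ≤ q ^ 5 * (10 / 9 * r - 1 / 3) * H₁ x ^ 2 := by
    have : 0 ≤ 10 / 9 * r - 1 / 3 := by linarith
    positivity
  have hHsq : q ^ 8 * (10 / 3 - 320 / 9 * r + 3520 / 81 * r ^ 2) * H x ^ 2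
      ≤ 120 * K ^ 2 * q ^ 2 := calc
    _ ≤ q ^ 8 * 60 * (K * x ^ 2) ^ 2 := by
      have : 10 / 3 - 320 / 9 * r + 3520 / 81 * r ^ 2 ≤ 60 := by nlinarith
      gcongr
    _ = 60 * (K ^ 2 * q ^ 2) * r ^ 2 := by ring
    _ ≤ 60 * (K ^ 2 * q ^ 2) * 2 := by gcongr; nlinarith
    _ = 120 * K ^ 2 * q ^ 2 := by ring
  linear_combination hH₂ + hH₁ + hHsq

lemma exists_energy_le {K x₁ : ℝ} (hx₁ : farField a ≤ x₁)
    (hK : ∀ x ≥ x₁, H x ≤ K * x ^ 2) : ∃ E, ∀ x ≥ x₁, energy a H H₁ H₂ x ≤ E := by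
  refine ⟨energy a H H₁ H₂ x₁ + 1000 * K ^ 2 * (x₁ * equilibrium a x₁ ^ 2), fun x hx => ?_⟩
  have h := sub_le_sub_of_hasDerivAt_le hx (fun y hy => S.hasDerivAt_energy (hx₁.trans hy.1))
    (fun y hy => (((hasDerivAt_id' y).mul
      ((hasDerivAt_equilibrium (hx₁.trans hy.1)).fun_pow 2)).const_mul (-(1000 * K ^ 2))))
    fun y hy => (S.energy_deriv_le (hx₁.trans hy.1.le) (hK y hy.1.le)).trans (by
      have hr := (sq_mul_equilibrium_cube_mem_Icc (hx₁.trans hy.1.le)).1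
      norm_num only
      have := mul_le_mul_of_nonneg_left hr (by positivity : 0 ≤ K ^ 2 * equilibrium a y ^ 2)
      nlinarith [sq_nonneg (K * equilibrium a y)])
  have hx₀ := one_le_of_farField_le (hx₁.trans hx)
  have : 0 ≤ 1000 * K ^ 2 * (x * equilibrium a x ^ 2) := by positivity
  simp only [Pi.mul_apply] at h
  linarith

lemma hasDerivAt_div_equilibrium (hx : farField a ≤ x) :
    HasDerivAt (fun x => H x / equilibrium a x)
      ((H₁ x + 2 / 3 * x * equilibrium a x ^ 3 * H x) / equilibrium a x) x := by
  have hq := (equilibrium_pos hx).ne'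
  refine ((S.hasDerivAt₀ x hx).fun_div (hasDerivAt_equilibrium hx) hq).congr_deriv ?_
  field_simp
  ring

lemma first_deriv_eq_of_isLocalExtr (hx : farField a ≤ x)
    (hextr : IsLocalExtr (fun x => H x / equilibrium a x) x) :
    H₁ x = -(2 / 3) * x * equilibrium a x ^ 3 * H x := by
  have h := hextr.hasDerivAt_eq_zero (S.hasDerivAt_div_equilibrium hx)
  rw [div_eq_zero_iff, or_iff_left (equilibrium_pos hx).ne'] at h
  linarith

lemma exists_mem_Icc_of_isLocalExtr {M : ℝ}
    (hfreq : ∃ᶠ x in atTop, H x ≤ M * equilibrium a x) :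
    ∃ c > 0, ∃ C, ∃ x₂ ≥ farField a, ∀ x ≥ x₂, IsLocalExtr (fun x => H x / equilibrium a x) x →
      H x / equilibrium a x ∈ Icc c C := by
  obtain ⟨K, hHK⟩ := S.exists_le_mul_sq hfreq
  obtain ⟨E, hE⟩ := S.exists_energy_le (le_add_of_nonneg_right zero_le_one) hHK
  have hlim : Tendsto (fun x => K * equilibrium a x) atTop (nhds 0) := by
    simpa using tendsto_equilibrium.const_mul K
  obtain ⟨R, hR⟩ := eventually_atTop.1
    (hlim.eventually_le_const (show (0 : ℝ) < 1 / 1000 by norm_num))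
  refine ⟨1 / (1 + 2 * |E|), by positivity, 2 * |E|, max (farField a + 1) R,
    (le_add_of_nonneg_right zero_le_one).trans (le_max_left _ _), fun x hx hextr => ?_⟩
  have hx₁ : farField a + 1 ≤ x := le_of_max_le_left hx
  have hx₀ : farField a ≤ x := (le_add_of_nonneg_right zero_le_one).trans hx₁
  have hq := equilibrium_pos hx₀
  have hH := S.pos x hx₀
  have hlower := le_energy_of_critical (H₂ := H₂) hx₀ (S.first_deriv_eq_of_isLocalExtr hx₀ hextr)
  have herr := error_le_half_div_equilibrium hx₀ hH (hHK x hx₁) (hR x (le_of_max_le_right hx))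
  have hinv : 1 / (2 * (H x / equilibrium a x) ^ 2) = equilibrium a x ^ 2 / (2 * H x ^ 2) := by
    field_simp
  refine mem_Icc_of_half_add_inv_sq_le (by positivity) ?_
  linarith [hE x hx₁, le_abs_self E]

theorem exists_div_equilibrium_mem_Icc {M : ℝ}
    (hfreq : ∃ᶠ x in atTop, H x ≤ M * equilibrium a x) :
    ∃ m > 0, ∃ M', ∀ᶠ x in atTop, H x / equilibrium a x ∈ Icc m M' := by
  obtain ⟨c, hc, C, x₂, hx₂, hextr⟩ := S.exists_mem_Icc_of_isLocalExtr hfreq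
  have hcont : ContinuousOn (fun x => H x / equilibrium a x) (Ici x₂) :=
    HasDerivAt.continuousOn fun x hx => S.hasDerivAt_div_equilibrium (hx₂.trans hx)
  have hlow : ∃ᶠ x in atTop, 1 / 2 ≤ H x / equilibrium a x := by
    refine ((S.frequently_le_mul_cube fun x hx => one_le_forcing hx).and_eventually
      (eventually_ge_atTop (farField a))).mono fun x ⟨hx, hx₀⟩ => ?_
    have hq := equilibrium_pos hx₀
    have hH := S.pos x hx₀
    rw [le_div_iff₀ hq]
    have hg := one_le_forcing hx₀
    refine le_of_pow_le_pow_left₀ three_ne_zero hH.le ?_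
    rw [mul_pow]
    nlinarith [hx, equilibrium_cube_mul hx₀]
  obtain ⟨m, hm, M', hbounds⟩ := exists_forall_mem_Icc_of_isLocalExtr hcont
    (div_pos (S.pos x₂ hx₂) (equilibrium_pos hx₂)) hc one_half_pos
    (fun x hx => hextr x (le_of_lt hx))
    ((hfreq.and_eventually (eventually_ge_atTop (farField a))).mono fun x ⟨hx, hx₀⟩ =>
      (div_le_iff₀ (equilibrium_pos hx₀)).2 hx) hlow
  exact ⟨m, hm, M', eventually_atTop.2 ⟨x₂, hbounds⟩⟩

end Energy

end ForcedProfile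

section UnitForcing

variable {x₀ : ℝ} {H H₁ H₂ : ℝ → ℝ}

namespace ForcedProfile

lemma exists_add_inv_sq_le_of_isLocalExtr (S : ForcedProfile (fun _ => 1) x₀ H H₁ H₂) :
    ∃ E, ∀ x ≥ x₀, IsLocalExtr H x → H x + 1 / (2 * H x ^ 2) ≤ E := by
  have henergy : ∀ x ≥ x₀, HasDerivAt (fun x => H₁ x * H₂ x - H x - 1 / (2 * H x ^ 2))
      (H₂ x ^ 2) x := fun x hx => by
    have hH := (S.pos x hx).ne'
    refine ((((S.hasDerivAt₁ x hx).fun_mul (S.hasDerivAt₂ x hx)).fun_sub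
      (S.hasDerivAt₀ x hx)).fun_sub
      (hasDerivAt_one_div_two_mul_sq (S.hasDerivAt₀ x hx) hH)).congr_deriv ?_
    ring
  refine ⟨-(H₁ x₀ * H₂ x₀ - H x₀ - 1 / (2 * H x₀ ^ 2)), fun x hx hextr => ?_⟩
  have hcrit := hextr.hasDerivAt_eq_zero (S.hasDerivAt₀ x hx)
  have hmono := le_of_hasDerivAt_nonneg hx (fun y hy => henergy y hy.1) fun y _ => sq_nonneg _
  simp only [hcrit, zero_mul, zero_sub] at hmono
  linarith

theorem exists_mem_Icc_of_forcing_eq_one (S : ForcedProfile (fun _ => 1) x₀ H H₁ H₂) {M : ℝ}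
    (hfreq : ∃ᶠ x in atTop, H x ≤ M) : ∃ m > 0, ∃ M', ∀ x ≥ x₀, H x ∈ Icc m M' := by
  obtain ⟨E, hE⟩ := S.exists_add_inv_sq_le_of_isLocalExtr
  have hlow : ∃ᶠ x in atTop, 1 / 2 ≤ H x :=
    ((S.frequently_le_mul_cube fun _ _ => le_rfl).and_eventually
      (eventually_ge_atTop x₀)).mono fun x ⟨hx, hx₀⟩ =>
        le_of_pow_le_pow_left₀ three_ne_zero (S.pos x hx₀).le (by linarith [hx])
  refine exists_forall_mem_Icc_of_isLocalExtr (c := 1 / (1 + 2 * |E|)) (C := 2 * |E|)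
    (HasDerivAt.continuousOn fun x hx => S.hasDerivAt₀ x hx) (S.pos x₀ le_rfl) (by positivity)
    one_half_pos (fun x hx hextr => mem_Icc_of_half_add_inv_sq_le (S.pos x (le_of_lt hx)) ?_)
    hfreq hlow
  linarith [hE x (le_of_lt hx) hextr, le_abs_self E, S.pos x (le_of_lt hx)]

end ForcedProfile

end UnitForcing

/-! ### Reduction of system (D) to the thin-film equation -/

section AlgebraicForm

/-- The terms which distinguish the `Ψ` equation of system (D) from `Ψ' = 1 / Φ ^ 3 - 1`, in the
variables `u = cos θ ^ (1 / 9)` and `s = sin θ`. -/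
noncomputable def perturbation (a Φ W Ψ u s : ℝ) : ℝ :=
  (a - 1) * u ^ 18 + ((16 / 3) * s - (224 / 27) * s ^ 3) * u ^ 51 * Φ
    + ((208 / 81) * s ^ 2 - 10 / 9) * u ^ 34 * W + (2 / 3) * s * u ^ 17 * Ψ

/-- System (D) off the invariant planes `cos θ = 0`, with `θ` replaced by `u = cos θ ^ (1 / 9)` and
`s = sin θ`, which makes it rational. -/
structure AlgebraicSol (a : ℝ) (Φ W Ψ u s : ℝ → ℝ) : Prop where
  u_pos : ∀ t, 0 < u t
  sq_add_pow : ∀ t, s t ^ 2 + u t ^ 18 = 1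
  hasDerivAt_u : ∀ t, HasDerivAt u (-(1 / 9) * s t * u t ^ 18) t
  hasDerivAt_s : ∀ t, HasDerivAt s (u t ^ 35) t
  Φ_pos : ∀ t, 0 < Φ t
  hasDerivAt_Φ : ∀ t, HasDerivAt Φ (W t) t
  hasDerivAt_W : ∀ t, HasDerivAt W (Ψ t) t
  hasDerivAt_Ψ : ∀ t, HasDerivAt Ψ
    (1 / Φ t ^ 3 - 1 - perturbation a (Φ t) (W t) (Ψ t) (u t) (s t)) t

/-- The space variable `x = -tan θ` of the film; the orientation sends `τ = -∞` to `x = ∞`. -/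
noncomputable def position (u s : ℝ → ℝ) (t : ℝ) : ℝ := -(s t / u t ^ 9)

/-- The film height `H`, as a function of `τ`. -/
noncomputable def filmHeight (Φ u : ℝ → ℝ) (t : ℝ) : ℝ := u t ^ 6 * Φ t

/-- The derivative `dH / dx` of the film height, as a function of `τ`. -/
noncomputable def filmSlope (Φ W u s : ℝ → ℝ) (t : ℝ) : ℝ :=
  -(u t ^ 2)⁻¹ * W t + (2 / 3) * s t * u t ^ 15 * Φ t

/-- The second derivative `d²H / dx²` of the film height, as a function of `τ`. -/
noncomputable def filmCurvature (Φ W Ψ u s : ℝ → ℝ) (t : ℝ) : ℝ :=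
  (u t ^ 10)⁻¹ * Ψ t - (4 / 9) * s t * u t ^ 7 * W t - (2 / 3) * u t ^ 42 * Φ t
    + (10 / 9) * s t ^ 2 * u t ^ 24 * Φ t

namespace AlgebraicSol

variable {a : ℝ} {Φ W Ψ u s : ℝ → ℝ} (S : AlgebraicSol a Φ W Ψ u s)

include S

lemma u_le_one (t : ℝ) : u t ≤ 1 :=
  (pow_le_one_iff_of_nonneg (S.u_pos t).le (by norm_num : 18 ≠ 0)).1
    (by linarith [S.sq_add_pow t, sq_nonneg (s t)])

lemma abs_s_le_one (t : ℝ) : |s t| ≤ 1 :=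
  (sq_le_one_iff_abs_le_one _).1 (by linarith [S.sq_add_pow t, pow_pos (S.u_pos t) 18])

lemma pow_mul_position_sq_add_one (t : ℝ) : u t ^ 18 * (position u s t ^ 2 + 1) = 1 := by
  have hu := (S.u_pos t).ne'
  rw [position]
  field_simp
  linear_combination S.sq_add_pow t

lemma hasDerivAt_position (t : ℝ) : HasDerivAt (position u s) (-u t ^ 8) t := by
  have hu := (S.u_pos t).ne'
  refine ((S.hasDerivAt_s t).fun_div ((S.hasDerivAt_u t).fun_pow 9)
    (pow_ne_zero 9 hu)).fun_neg.congr_deriv ?_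
  push_cast
  linear_combination (norm := (field_simp; ring)) -u t ^ 8 * S.sq_add_pow t

lemma hasDerivAt_filmHeight (t : ℝ) :
    HasDerivAt (filmHeight Φ u) (filmSlope Φ W u s t * -u t ^ 8) t := by
  have hu := (S.u_pos t).ne'
  refine (((S.hasDerivAt_u t).fun_pow 6).fun_mul (S.hasDerivAt_Φ t)).congr_deriv ?_
  rw [filmSlope]
  push_cast
  field_simp
  ring

lemma hasDerivAt_filmSlope (t : ℝ) :
    HasDerivAt (filmSlope Φ W u s) (filmCurvature Φ W Ψ u s t * -u t ^ 8) t := by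
  have hu := (S.u_pos t).ne'
  refine ((((S.hasDerivAt_u t).fun_pow 2).fun_inv (pow_ne_zero 2 hu)).fun_neg.fun_mul
    (S.hasDerivAt_W t) |>.fun_add ((((S.hasDerivAt_s t).const_mul (2 / 3)).fun_mul
    ((S.hasDerivAt_u t).fun_pow 15)).fun_mul (S.hasDerivAt_Φ t))).congr_deriv ?_
  rw [filmCurvature]
  push_cast
  field_simp
  ring

lemma hasDerivAt_filmCurvature (t : ℝ) : HasDerivAt (filmCurvature Φ W Ψ u s)
    ((position u s t ^ 2 + a - 1 / filmHeight Φ u t ^ 3) * -u t ^ 8) t := by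
  have hu := (S.u_pos t).ne'
  have hΦ := (S.Φ_pos t).ne'
  have hpow := fun n => (S.hasDerivAt_u t).fun_pow n
  refine (((((hpow 10).fun_inv (pow_ne_zero 10 hu)).fun_mul (S.hasDerivAt_Ψ t)).fun_sub
    ((((S.hasDerivAt_s t).const_mul (4 / 9)).fun_mul (hpow 7)).fun_mul (S.hasDerivAt_W t))).fun_sub
    (((hpow 42).const_mul (2 / 3)).fun_mul (S.hasDerivAt_Φ t)) |>.fun_add
    (((((S.hasDerivAt_s t).fun_pow 2).const_mul (10 / 9)).fun_mul (hpow 24)).fun_mul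
      (S.hasDerivAt_Φ t))).congr_deriv ?_
  rw [position, filmHeight, perturbation]
  push_cast
  linear_combination (norm := (field_simp; ring)) ((u t ^ 10)⁻¹ + (16 / 3) * s t * u t ^ 41 * Φ t
    - (10 / 9) * u t ^ 24 * W t) * S.sq_add_pow t

lemma strictAnti_position : StrictAnti (position u s) := strictAnti_of_deriv_neg fun t => by
  rw [(S.hasDerivAt_position t).deriv]
  exact neg_lt_zero.2 (pow_pos (S.u_pos t) 8)

/-- Since `dx / dτ = -(1 + x ^ 2) ^ (-4 / 9)`, the primitive of `(1 + x ^ 2) ^ (4 / 9)` recovers `τ`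
from `x`; its being defined on all of `ℝ` is what makes `x` onto. -/
lemma exists_inverse_position : ∃ T : ℝ → ℝ, (∀ x, position u s (T x) = x) ∧
    (∀ t, T (position u s t) = t) ∧ ∀ x, HasDerivAt T (-u (T x) ^ 8)⁻¹ x := by
  set F : ℝ → ℝ := fun x => ∫ y in (0 : ℝ)..x, (y ^ 2 + 1) ^ ((4 : ℝ) / 9)
  have hF : ∀ x, HasDerivAt F ((x ^ 2 + 1) ^ ((4 : ℝ) / 9)) x := fun x =>
    (Continuous.integral_hasStrictDerivAt (by fun_prop (disch := norm_num)) 0 x).hasDerivAt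
  have hFinj : Function.Injective F := (strictMono_of_deriv_pos fun x => by
    rw [(hF x).deriv]
    positivity).injective
  have hrate : ∀ t, (position u s t ^ 2 + 1) ^ ((4 : ℝ) / 9) = (u t ^ 8)⁻¹ := fun t => by
    have hu := S.u_pos t
    rw [eq_inv_of_mul_eq_one_right (S.pow_mul_position_sq_add_one t),
      Real.inv_rpow (by positivity), ← Real.rpow_natCast, ← Real.rpow_mul hu.le,
      ← Real.rpow_natCast]
    norm_num
  have hFX : ∀ t, F (position u s t) = F (position u s 0) - t := fun t => by
    have hderiv : ∀ t, HasDerivAt (fun t => F (position u s t) + t) 0 t := fun t => by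
      refine (((hF _).comp t (S.hasDerivAt_position t)).fun_add (hasDerivAt_id' t)).congr_deriv ?_
      have hu := (S.u_pos t).ne'
      rw [hrate]
      field_simp
      ring
    have := is_const_of_deriv_eq_zero (fun t => (hderiv t).differentiableAt)
      (fun t => (hderiv t).deriv) t 0
    linarith
  have hright : ∀ x, position u s (F (position u s 0) - F x) = x := fun x =>
    hFinj (by rw [hFX]; ring)
  refine ⟨fun x => F (position u s 0) - F x, hright, fun t => by
    simp only [hFX t, sub_sub_cancel], fun x => ?_⟩
  refine ((hF x).const_sub _).congr_deriv ?_
  rw [inv_neg, ← hrate, hright]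

lemma tendsto_position : Tendsto (position u s) atBot atTop := by
  obtain ⟨T, hT, -⟩ := S.exists_inverse_position
  exact tendsto_atBot_atTop.2 fun x => ⟨T x, fun t ht =>
    (hT x).symm.le.trans (S.strictAnti_position.antitone ht)⟩

lemma forcedProfile {T : ℝ → ℝ} (hT : ∀ x, position u s (T x) = x)
    (hT' : ∀ x, HasDerivAt T (-u (T x) ^ 8)⁻¹ x) (x₀ : ℝ) :
    ForcedProfile (fun x => x ^ 2 + a) x₀ (filmHeight Φ u ∘ T) (filmSlope Φ W u s ∘ T)
      (filmCurvature Φ W Ψ u s ∘ T) := by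
  have hrate : ∀ x, -u (T x) ^ 8 ≠ 0 := fun x => neg_ne_zero.2 (pow_pos (S.u_pos _) 8).ne'
  refine ⟨fun x _ => mul_pos (pow_pos (S.u_pos _) 6) (S.Φ_pos _), fun x _ => ?_, fun x _ => ?_,
    fun x _ => ?_⟩
  · exact ((S.hasDerivAt_filmHeight (T x)).comp x (hT' x)).congr_deriv
      (mul_inv_cancel_right₀ (hrate x) _)
  · exact ((S.hasDerivAt_filmSlope (T x)).comp x (hT' x)).congr_deriv
      (mul_inv_cancel_right₀ (hrate x) _)
  · refine ((S.hasDerivAt_filmCurvature (T x)).comp x (hT' x)).congr_deriv ?_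
    rw [mul_inv_cancel_right₀ (hrate x), hT, Function.comp_apply]

lemma equilibrium_position_mem_Icc {t : ℝ} (ht : farField a ≤ position u s t) :
    equilibrium a (position u s t) ∈ Icc (u t ^ 6 / 2) (2 * u t ^ 6) :=
  equilibrium_mem_Icc_of_cube_mul_eq_one ht (pow_pos (S.u_pos t) 6)
    (by rw [← pow_mul, S.pow_mul_position_sq_add_one])

theorem exists_eventually_mem_Icc {M : ℝ} (hfreq : ∃ᶠ t in atBot, Φ t ≤ M) :
    ∃ m > 0, ∃ M', ∀ᶠ t in atBot, Φ t ∈ Icc m M' := by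
  obtain ⟨T, hT, hTX, hT'⟩ := S.exists_inverse_position
  have hfar : ∀ᶠ t in atBot, farField a ≤ position u s t :=
    S.tendsto_position.eventually_ge_atTop _
  have hfreqH : ∃ᶠ x in atTop, (filmHeight Φ u ∘ T) x ≤ 2 * M * equilibrium a x := by
    refine S.tendsto_position.frequently ((hfreq.and_eventually hfar).mono fun t ⟨ht, hx⟩ => ?_)
    have hq := (S.equilibrium_position_mem_Icc hx).1
    have hu := pow_pos (S.u_pos t) 6
    have hM := (S.Φ_pos t).trans_le ht
    rw [Function.comp_apply, hTX, filmHeight]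
    nlinarith
  obtain ⟨m, hm, M', hbounds⟩ :=
    (S.forcedProfile hT hT' _).exists_div_equilibrium_mem_Icc hfreqH
  refine ⟨m / 2, by positivity, 2 * M', ?_⟩
  filter_upwards [hfar, S.tendsto_position.eventually hbounds] with t hx ht
  obtain ⟨hq₁, hq₂⟩ := S.equilibrium_position_mem_Icc hx
  have hu := pow_pos (S.u_pos t) 6
  have hΦ := S.Φ_pos t
  rw [Function.comp_apply, hTX, filmHeight, mem_Icc, le_div_iff₀ (equilibrium_pos hx),
    div_le_iff₀ (equilibrium_pos hx)] at ht
  constructor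
  · refine le_of_mul_le_mul_left ?_ hu
    nlinarith
  · refine le_of_mul_le_mul_left ?_ hu
    have hM' : 0 < M' := pos_of_mul_pos_left ((mul_pos hu hΦ).trans_le ht.2) (equilibrium_pos hx).le
    nlinarith

end AlgebraicSol

lemma abs_perturbation_le {a Φ W Ψ u s : ℝ} (hs : |s| ≤ 1) (hu₀ : 0 ≤ u) (hu₁ : u ≤ 1)
    (hΦ : 0 ≤ Φ) : |perturbation a Φ W Ψ u s|
      ≤ (|a - 1| + 20) * u ^ 18 * (1 + Φ + |W|) + u ^ 17 * |Ψ| := by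
  have hterm : ∀ n k c Y : ℝ, |c| ≤ k → |c * n * Y| ≤ k * |n| * |Y| := fun n k c Y hc => by
    rw [abs_mul, abs_mul]
    gcongr
  have hpow : ∀ n, 18 ≤ n → |u ^ n| ≤ u ^ 18 := fun n hn => by
    rw [abs_of_nonneg (pow_nonneg hu₀ n)]
    exact pow_le_pow_of_le_one hu₀ hu₁ hn
  obtain ⟨hs₁, hs₂⟩ := abs_le.1 hs
  have hs_sq : s ^ 2 ≤ 1 := (sq_le_one_iff_abs_le_one s).2 hs
  obtain ⟨hs₃, hs₄⟩ : s ^ 3 ∈ Icc (-1 : ℝ) 1 :=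
    abs_le.1 (abs_pow s 3 ▸ pow_le_one₀ (abs_nonneg s) hs)
  have h₁ := hterm (u ^ 51) 20 (16 / 3 * s - 224 / 27 * s ^ 3) Φ
    (abs_le.2 ⟨by linarith, by linarith⟩)
  have h₂ := hterm (u ^ 34) 20 (208 / 81 * s ^ 2 - 10 / 9) W
    (abs_le.2 ⟨by linarith [sq_nonneg s], by linarith⟩)
  have h₃ := hterm (u ^ 17) 1 (2 / 3 * s) Ψ (abs_le.2 ⟨by linarith, by linarith⟩)
  calc |perturbation a Φ W Ψ u s|
      ≤ |(a - 1) * u ^ 18| + |(16 / 3 * s - 224 / 27 * s ^ 3) * u ^ 51 * Φ|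
        + |(208 / 81 * s ^ 2 - 10 / 9) * u ^ 34 * W| + |2 / 3 * s * u ^ 17 * Ψ| :=
        (abs_add_le _ _).trans (add_le_add_left (abs_add_three _ _ _) _)
    _ ≤ |a - 1| * |u ^ 18| + 20 * |u ^ 51| * |Φ| + 20 * |u ^ 34| * |W| + 1 * |u ^ 17| * |Ψ| := by
        rw [abs_mul]
        gcongr
    _ ≤ |a - 1| * u ^ 18 + 20 * u ^ 18 * Φ + 20 * u ^ 18 * |W| + 1 * u ^ 17 * |Ψ| := by
        rw [abs_of_nonneg hΦ, abs_of_nonneg (pow_nonneg hu₀ 17)]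
        gcongr <;> exact hpow _ (by norm_num)
    _ ≤ (|a - 1| + 20) * u ^ 18 * (1 + Φ + |W|) + u ^ 17 * |Ψ| := by
        have : 0 ≤ u ^ 18 * (20 + |a - 1| * Φ + |a - 1| * |W|) := by positivity
        linarith

namespace AlgebraicSol

variable {a : ℝ} {Φ W Ψ u s : ℝ → ℝ} (S : AlgebraicSol a Φ W Ψ u s)

include S

lemma s_mem_Icc {t : ℝ} (ht : 1 ≤ position u s t) : s t ∈ Icc (-1) (-(1 / 2)) := by
  have hu := pow_pos (S.u_pos t) 9
  have hsu : s t = -(position u s t) * u t ^ 9 := by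
    rw [position, neg_neg, div_mul_cancel₀ _ hu.ne']
  refine ⟨(abs_le.1 (S.abs_s_le_one t)).1, ?_⟩
  have := S.sq_add_pow t
  have hle : u t ^ 9 ≤ -s t := by nlinarith
  nlinarith

lemma tendsto_u_pow : Tendsto (fun t => u t ^ 18) atBot (nhds 0) := by
  have hinv := tendsto_inv_atTop_zero.comp (tendsto_atTop_add_const_right _ (1 : ℝ)
    ((tendsto_pow_atTop two_ne_zero).comp S.tendsto_position))
  exact hinv.congr fun t => (eq_inv_of_mul_eq_one_left (S.pow_mul_position_sq_add_one t)).symm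

lemma tendsto_rate (C : ℝ) : Tendsto (fun t => -2 * C * s t * u t ^ 18) atBot (nhds 0) := by
  refine squeeze_zero_norm (fun t => ?_)
    (by simpa using S.tendsto_u_pow.const_mul (2 * |C|) :
      Tendsto (fun t => 2 * |C| * u t ^ 18) atBot (nhds 0))
  have hu := pow_pos (S.u_pos t) 18
  have hs := S.abs_s_le_one t
  calc ‖-2 * C * s t * u t ^ 18‖ = 2 * |C| * |s t| * u t ^ 18 := by
        rw [Real.norm_eq_abs, abs_mul, abs_mul, abs_mul, abs_of_pos hu]
        norm_num
    _ ≤ 2 * |C| * 1 * u t ^ 18 := by gcongr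
    _ = 2 * |C| * u t ^ 18 := by ring

lemma perturbedFlow {m M N : ℝ} (hm : 0 < m) (hΦ : ∀ t ≤ N, Φ t ∈ Icc m M)
    (hN : ∀ t ≤ N, 1 ≤ position u s t) :
    PerturbedFlow m M N Φ W Ψ (fun t => perturbation a (Φ t) (W t) (Ψ t) (u t) (s t))
      (fun t => -2 * (|a - 1| + 20) * s t * u t ^ 18) (fun t => u t ^ 17)
      (fun t => 18 * (|a - 1| + 20) * u t) where
  lower_pos := hm
  mem_Icc := hΦ
  hasDerivAt_Φ t _ := S.hasDerivAt_Φ t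
  hasDerivAt_W t _ := S.hasDerivAt_W t
  hasDerivAt_Ψ t _ := S.hasDerivAt_Ψ t
  abs_le t ht := by
    have hu := S.u_pos t
    have hs := (S.s_mem_Icc (hN t ht)).2
    have hΦ := S.Φ_pos t
    refine (abs_perturbation_le (S.abs_s_le_one t) hu.le (S.u_le_one t) hΦ.le).trans ?_
    gcongr
    have : 0 ≤ |a - 1| + 20 := by positivity
    nlinarith
  κ_nonneg t _ := pow_nonneg (S.u_pos t).le 17
  κ_sq_le t ht := by
    have hu := pow_pos (S.u_pos t) 18
    have hs := (S.s_mem_Icc (hN t ht)).2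
    calc (u t ^ 17) ^ 2 = u t ^ 34 := by ring
      _ ≤ u t ^ 18 := pow_le_pow_of_le_one (S.u_pos t).le (S.u_le_one t) (by norm_num)
      _ = 1 * u t ^ 18 := (one_mul _).symm
      _ ≤ -2 * (|a - 1| + 20) * s t * u t ^ 18 := by
        gcongr
        nlinarith [abs_nonneg (a - 1)]
  hasDerivAt_U t _ := ((S.hasDerivAt_u t).const_mul _).congr_deriv (by ring)
  U_nonneg t _ := by
    have := S.u_pos t
    positivity
  tendsto_ρ := S.tendsto_rate _

theorem tendsto {M : ℝ} (hfreq : ∃ᶠ t in atBot, Φ t ≤ M) :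
    Tendsto (fun t => (Φ t, W t, Ψ t)) atBot (nhds (1, 0, 0)) := by
  obtain ⟨m, hm, M', hbounds⟩ := S.exists_eventually_mem_Icc hfreq
  obtain ⟨N, hN⟩ := eventually_atBot.1
    (hbounds.and (S.tendsto_position.eventually_ge_atTop 1))
  exact (S.perturbedFlow hm (fun t ht => (hN t ht).1) fun t ht => (hN t ht).2).tendsto

end AlgebraicSol

end AlgebraicForm

section SystemD

lemma eq_zero_of_abs_hasDerivAt_le {f f' : ℝ → ℝ} {t₀ : ℝ} (hf₀ : ∀ t, 0 ≤ f t)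
    (hf : ∀ t, HasDerivAt f (f' t) t) (hbound : ∀ t, |f' t| ≤ f t) (h₀ : f t₀ = 0) (t : ℝ) :
    f t = 0 := by
  refine le_antisymm ?_ (hf₀ t)
  rcases le_total t t₀ with ht | ht
  · have h := le_of_hasDerivAt_nonneg ht (fun x _ => (hf x).fun_mul (Real.hasDerivAt_exp x))
      fun x _ => by nlinarith [(abs_le.1 (hbound x)).1, Real.exp_pos x]
    rw [h₀, zero_mul] at h
    exact nonpos_of_mul_nonpos_left h (Real.exp_pos t)
  · have h := le_of_hasDerivAt_nonneg ht
      (fun x _ => ((hf x).fun_mul (hasDerivAt_neg x).exp).fun_neg)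
      fun x _ => by nlinarith [(abs_le.1 (hbound x)).2, Real.exp_pos (-x)]
    rw [h₀, zero_mul, neg_le_neg_iff] at h
    exact nonpos_of_mul_nonpos_left h (Real.exp_pos (-t))

lemma tendsto_of_hasDerivAt_one_div_cube_sub_one {Φ W Ψ : ℝ → ℝ} {M : ℝ} (hpos : ∀ t, 0 < Φ t)
    (hΦ : ∀ t, HasDerivAt Φ (W t) t) (hW : ∀ t, HasDerivAt W (Ψ t) t)
    (hΨ : ∀ t, HasDerivAt Ψ (1 / Φ t ^ 3 - 1) t) (hfreq : ∃ᶠ t in atBot, Φ t ≤ M) :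
    Tendsto (fun t => (Φ t, W t, Ψ t)) atBot (nhds (1, 0, 0)) := by
  have hneg := fun x : ℝ => hasDerivAt_neg x
  have S : ForcedProfile (fun _ => 1) 0 (Φ ∘ Neg.neg) (-W ∘ Neg.neg) (Ψ ∘ Neg.neg) :=
    ⟨fun x _ => hpos (-x), fun x _ => ((hΦ _).comp x (hneg x)).congr_deriv (mul_neg_one _),
      fun x _ => ((hW _).fun_neg.comp x (hneg x)).congr_deriv (by simp),
      fun x _ => ((hΨ _).comp x (hneg x)).congr_deriv (by simp)⟩
  obtain ⟨m, hm, M', hbounds⟩ := S.exists_mem_Icc_of_forcing_eq_one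
    (tendsto_neg_atBot_atTop.frequently (by simpa using hfreq))
  have P : PerturbedFlow m M' 0 Φ W Ψ 0 0 0 0 :=
    ⟨hm, fun t ht => by simpa using hbounds (-t) (neg_nonneg.2 ht), fun t _ => hΦ t,
      fun t _ => hW t, fun t _ => by simpa using hΨ t, fun t _ => by simp, fun _ _ => le_rfl,
      fun _ _ => by simp, fun t _ => hasDerivAt_const t 0, fun _ _ => le_rfl, tendsto_const_nhds⟩
  exact P.tendsto

variable {a : ℝ} {Φ W Ψ θ : ℝ → ℝ}

lemma SolD.cos_eq_zero_or_pos (hsol : SolD a Φ W Ψ θ)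
    (hθ : ∀ τ, θ τ ∈ Icc (-(Real.pi / 2)) (Real.pi / 2)) :
    (∀ τ, Real.cos (θ τ) = 0) ∨ ∀ τ, 0 < Real.cos (θ τ) := by
  have hcos : ∀ τ, 0 ≤ Real.cos (θ τ) := fun τ => Real.cos_nonneg_of_mem_Icc (hθ τ)
  refine or_iff_not_imp_right.2 fun hnot => ?_
  push Not at hnot
  obtain ⟨τ₀, hτ₀⟩ := hnot
  refine eq_zero_of_abs_hasDerivAt_le hcos (fun τ => (hsol τ).2.2.2.cos) (fun τ => ?_)
    (hτ₀.antisymm (hcos τ₀))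
  rw [abs_mul, abs_neg, abs_of_nonneg (Real.rpow_nonneg (hcos τ) _)]
  refine (mul_le_of_le_one_left (Real.rpow_nonneg (hcos τ) _) (Real.abs_sin_le_one _)).trans ?_
  simpa using Real.rpow_le_rpow_of_exponent_ge' (hcos τ) (Real.cos_le_one _) zero_le_one
    (show (1 : ℝ) ≤ 26 / 9 by norm_num)

lemma SolD.algebraicSol (hsol : SolD a Φ W Ψ θ) (hΦ : ∀ τ, 0 < Φ τ)
    (hcos : ∀ τ, 0 < Real.cos (θ τ)) :
    AlgebraicSol a Φ W Ψ (fun τ => Real.cos (θ τ) ^ (1 / 9 : ℝ)) (fun τ => Real.sin (θ τ)) := by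
  have hpow : ∀ τ (n : ℕ),
      (Real.cos (θ τ) ^ (1 / 9 : ℝ)) ^ n = Real.cos (θ τ) ^ ((n : ℝ) / 9) := fun τ n => by
    rw [← Real.rpow_natCast, ← Real.rpow_mul (hcos τ).le, one_div_mul_eq_div]
  refine ⟨fun τ => Real.rpow_pos_of_pos (hcos τ) _, fun τ => ?_, fun τ => ?_, fun τ => ?_, hΦ,
    fun τ => (hsol τ).1, fun τ => (hsol τ).2.1, fun τ => ?_⟩
  · rw [hpow, ← Real.sin_sq_add_cos_sq (θ τ), ← Real.rpow_natCast (Real.cos (θ τ)) 2]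
    norm_num
  · refine ((hsol τ).2.2.2.cos.rpow_const (p := (1 : ℝ) / 9) (.inl (hcos τ).ne')).congr_deriv ?_
    have hsplit : Real.cos (θ τ) ^ ((18 : ℕ) / 9 : ℝ)
        = Real.cos (θ τ) ^ (26 / 9 : ℝ) * Real.cos (θ τ) ^ (1 / 9 - 1 : ℝ) := by
      rw [← Real.rpow_add (hcos τ)]
      norm_num
    rw [hpow, hsplit]
    ring
  · refine (hsol τ).2.2.2.sin.congr_deriv ?_
    rw [hpow, mul_comm, ← Real.rpow_add_one (hcos τ).ne']
    norm_num
  · refine (hsol τ).2.2.1.congr_deriv ?_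
    rw [dPsi, perturbation, hpow, hpow, hpow, hpow, ← Real.rpow_natCast (Real.cos (θ τ)) 2]
    norm_num
    ring

theorem control_of_oscillations_general (hsol : SolD a Φ W Ψ θ) (hΦ : ∀ τ, 0 < Φ τ)
    (hθ : ∀ τ, θ τ ∈ Icc (-(Real.pi / 2)) (Real.pi / 2))
    (hinf : liminf (fun τ => (Φ τ : EReal)) atBot < ⊤) :
    Tendsto (fun τ => (Φ τ, W τ, Ψ τ)) atBot (nhds (1, 0, 0)) := by
  obtain ⟨M, hM, -⟩ := EReal.lt_iff_exists_real_btwn.1 hinf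
  have hfreq : ∃ᶠ τ in atBot, Φ τ ≤ M :=
    (frequently_lt_of_liminf_lt (by isBoundedDefault) hM).mono fun τ hτ =>
      EReal.coe_le_coe_iff.1 hτ.le
  rcases hsol.cos_eq_zero_or_pos hθ with hcos | hcos
  · refine tendsto_of_hasDerivAt_one_div_cube_sub_one hΦ (fun τ => (hsol τ).1)
      (fun τ => (hsol τ).2.1) (fun τ => (hsol τ).2.2.1.congr_deriv ?_) hfreq
    rw [dPsi, hcos]
    norm_num
  · exact (hsol.algebraicSol hΦ hcos).tendsto hfreq

lemma limsup_sum_le_and_le_liminf_of_tendsto {l : Filter ℝ} [l.NeBot]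
    (h : Tendsto (fun τ => (Φ τ, W τ, Ψ τ)) l (nhds (1, 0, 0))) :
    limsup (fun τ => ((Φ τ + |W τ| + |Ψ τ| : ℝ) : EReal)) l ≤ (1 : ℝ) ∧
      ((1 : ℝ) : EReal) ≤ liminf (fun τ => (Φ τ : EReal)) l := by
  have hsum : Tendsto (fun τ => Φ τ + |W τ| + |Ψ τ|) l (nhds 1) := by
    simpa using (h.fst_nhds.add h.snd_nhds.fst_nhds.abs).add h.snd_nhds.snd_nhds.abs
  exact ⟨(EReal.tendsto_coe.2 hsum).limsup_eq.le, (EReal.tendsto_coe.2 h.fst_nhds).liminf_eq.ge⟩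

end SystemD

/-- uniform control of the oscillations.  There are constants `C₁, C₂ > 0`
depending only on `a` such that every global solution of system (D) converging to `p₊`
as `τ → +∞`, with `θ → -π/2` as `τ → -∞` and `liminf_{τ→-∞} Φ < ∞`, satisfies
`limsup_{τ→-∞} (Φ + |W| + |Ψ|) ≤ C₁` and `liminf_{τ→-∞} Φ ≥ C₂`. -/
theorem control_of_oscillations (a : ℝ) :
    ∃ C₁ > (0 : ℝ), ∃ C₂ > (0 : ℝ), ∀ Φ W Ψ θ : ℝ → ℝ,
      SolD a Φ W Ψ θ →
      (∀ τ : ℝ, 0 < Φ τ) →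
      (∀ τ : ℝ, θ τ ∈ Set.Icc (-(Real.pi / 2)) (Real.pi / 2)) →
      Tendsto (fun τ => (Φ τ, W τ, Ψ τ, θ τ)) atTop
        (nhds ((1 : ℝ), (0 : ℝ), (0 : ℝ), Real.pi / 2)) →
      Tendsto θ atBot (nhds (-(Real.pi / 2))) →
      Filter.liminf (fun τ : ℝ => ((Φ τ : ℝ) : EReal)) atBot < ⊤ →
      (Filter.limsup (fun τ : ℝ => ((Φ τ + |W τ| + |Ψ τ| : ℝ) : EReal)) atBot ≤ (C₁ : EReal) ∧
        (C₂ : EReal) ≤ Filter.liminf (fun τ : ℝ => ((Φ τ : ℝ) : EReal)) atBot) :=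
  ⟨1, one_pos, 1, one_pos, fun _ _ _ _ hsol hΦ hθ _ _ hinf =>
    limsup_sum_le_and_le_liminf_of_tendsto (control_of_oscillations_general hsol hΦ hθ hinf)⟩
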